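/- arXiv:1608.01144 — 8 statements merged into one kernel-verified Lean document; each statement's English description precedes it below -/
import Mathlib

section
/- Let G be a controllable simple graph on n vertices with adjacency matrix A and walk matrix W, and let Q ∈ Q_G have level ℓ. If 2^{⌊n/2⌋+1} does not divide det(W), then 2 does not divide ℓ. -/
/-!
Let `A` be the adjacency matrix, `e` the all-ones vector, `W` the walk matrix, `m = n / 2` and
`s = n % 2`. The numbers `eᵀ A ^ a e` are even for `a ≥ 1` (`walk_even`), and also for `a = 0`
when `n` is even. Hence `Wᵀ W = D K` with `D = diag(1, …, 1, 2, …, 2)` having `s` ones, and the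
hypothesis on `det W` says exactly that `det K` is odd (`exists_scaled_gram`).

Suppose `ℓ` is even and let `v` be a column of `ℓQ`. As `QᵀAQ` is an integer matrix `B` and
`Qᵀe = e`, one has `eᵀ A ^ k v ≡ 0` mod `2` and `vᵀ A ^ k v = ℓ² (B ^ k)_jj ≡ 0` mod `4`.
From the first congruence and the oddness of `det K`, the vector `v` is mod `2` a combination of
walk vectors; since these span a totally isotropic space over `ZMod 2`, of dimension at most `m`,
one gets `v ≡ ∑_{j < m} y_j A ^ (j + s) e` (`exists_short`). The second congruence then reads
`∑_j y_j² eᵀ A ^ (k + 2 (j + s)) e ≡ 0` mod `4` for all `k`, that is, `Wᵀ W c ≡ 0` mod `4` for the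
vector `c` with entries `y_j²` at the places `2 (j + s) < n`. So `K c ≡ 0` mod `2`, and `c`, the
`y_j` and `v` vanish mod `2` (`even_of_congruences`). Thus all entries of `ℓQ` are even, against
the minimality of `ℓ`.
-/

open Polynomial Matrix

/-- The discriminant of an `n × n` integer matrix `A`:
`Δ_A = (-1)^(n(n-1)/2) · res(φ, φ')`, where `φ` is the (monic) characteristic polynomial
of `A`.  Since `φ` is monic, the resultant `res(φ, φ')` equals the norm of the image of
`φ'` in the quotient ring `ℤ[x]/(φ)`. -/
noncomputable def matrixDisc {n : ℕ} (A : Matrix (Fin n) (Fin n) ℤ) : ℤ :=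
  (-1) ^ (n * (n - 1) / 2) *
    Algebra.norm ℤ (AdjoinRoot.mk A.charpoly (Polynomial.derivative A.charpoly))

/-- A rational matrix is an integer matrix if all its entries are integers. -/
def IsIntegerMatrix {n : ℕ} (M : Matrix (Fin n) (Fin n) ℚ) : Prop :=
  ∀ i j, ∃ z : ℤ, M i j = (z : ℚ)

/-- A signed permutation matrix: each row and column has exactly one nonzero entry,
equal to `±1`. -/
def IsSignedPermMatrix {n : ℕ} (Q : Matrix (Fin n) (Fin n) ℚ) : Prop :=
  ∃ (σ : Equiv.Perm (Fin n)) (ε : Fin n → ℚ), (∀ j, ε j = 1 ∨ ε j = -1) ∧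
    ∀ i j, Q i j = if i = σ j then ε j else 0

/-- A permutation matrix. -/
def IsPermMatrix {n : ℕ} (Q : Matrix (Fin n) (Fin n) ℚ) : Prop :=
  ∃ σ : Equiv.Perm (Fin n), ∀ i j, Q i j = if i = σ j then 1 else 0

/-- `ℓ` is the level of the rational matrix `Q`, i.e. the smallest positive integer `ℓ`
such that `ℓ • Q` is an integer matrix. -/
def IsLevel {n : ℕ} (Q : Matrix (Fin n) (Fin n) ℚ) (ℓ : ℕ) : Prop :=
  0 < ℓ ∧ IsIntegerMatrix ((ℓ : ℚ) • Q) ∧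
    ∀ m : ℕ, 0 < m → IsIntegerMatrix ((m : ℚ) • Q) → ℓ ≤ m

/-- The walk matrix `W = [e, Ae, …, A^{n-1}e]` of a graph, where `e` is the all-ones
vector. -/
def walkMatrix {n : ℕ} (G : SimpleGraph (Fin n)) [DecidableRel G.Adj] :
    Matrix (Fin n) (Fin n) ℤ :=
  Matrix.of fun i j => ((G.adjMatrix ℤ ^ (j : ℕ)) *ᵥ fun _ => 1) i

/-- Two graphs have the same generalized spectrum: their adjacency matrices are
cospectral, and the adjacency matrices of their complements are cospectral. -/
def GenCospectral {n : ℕ} (G H : SimpleGraph (Fin n))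
    [DecidableRel G.Adj] [DecidableRel H.Adj] : Prop :=
  (G.adjMatrix ℤ).charpoly = (H.adjMatrix ℤ).charpoly ∧
    (Gᶜ.adjMatrix ℤ).charpoly = (Hᶜ.adjMatrix ℤ).charpoly

/-- `G` is determined by its generalized spectrum: every graph with the same
generalized spectrum as `G` is isomorphic to `G`. -/
def IsDGS {n : ℕ} (G : SimpleGraph (Fin n)) [DecidableRel G.Adj] : Prop :=
  ∀ (H : SimpleGraph (Fin n)) [DecidableRel H.Adj], GenCospectral G H → Nonempty (G ≃g H)

/-- Membership in the set `𝒬_G` of rational orthogonal matrices `Q` with `Qe = e`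
such that `QᵀAQ` is a `(0,1)`-matrix, where `A` is the adjacency matrix of `G`. -/
def MemQG {n : ℕ} (G : SimpleGraph (Fin n)) [DecidableRel G.Adj]
    (Q : Matrix (Fin n) (Fin n) ℚ) : Prop :=
  Qᵀ * Q = 1 ∧ (Q *ᵥ fun _ => 1) = (fun _ => 1) ∧
    ∀ i j, (Qᵀ * G.adjMatrix ℚ * Q) i j = 0 ∨ (Qᵀ * G.adjMatrix ℚ * Q) i j = 1

/-! ### Symmetric forms mod 2 and the parity of walk counts -/

/-- Off-diagonal terms of a symmetric double sum cancel mod `2`. -/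
theorem sym_sum {ι : Type*} (S : Finset ι) (F : ι → ι → ℤ) (hF : ∀ i j, F i j = F j i) :
    (2 : ℤ) ∣ ∑ i ∈ S, ∑ j ∈ S, F i j - ∑ i ∈ S, F i i := by
  classical
  induction S using Finset.induction_on with
  | empty => simp
  | insert a S ha ih =>
    obtain ⟨t, ht⟩ := ih
    refine ⟨t + ∑ j ∈ S, F a j, ?_⟩
    simp only [Finset.sum_insert ha, Finset.sum_add_distrib]
    rw [Finset.sum_congr rfl fun i _ => hF i a]
    linarith

theorem dot_pow {n : ℕ} {A : Matrix (Fin n) (Fin n) ℤ} (hA : Aᵀ = A) (k : ℕ)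
    (x y : Fin n → ℤ) : (A ^ k *ᵥ x) ⬝ᵥ y = x ⬝ᵥ (A ^ k *ᵥ y) := by
  rw [dotProduct_mulVec, ← mulVec_transpose, transpose_pow, hA]

theorem walk_dot {n : ℕ} {A : Matrix (Fin n) (Fin n) ℤ} (hA : Aᵀ = A) (a b : ℕ) :
    (A ^ a *ᵥ 1) ⬝ᵥ (A ^ b *ᵥ 1) = 1 ⬝ᵥ (A ^ (a + b) *ᵥ 1) := by
  rw [dot_pow hA, mulVec_mulVec, pow_add]

theorem quad_even {n : ℕ} {A : Matrix (Fin n) (Fin n) ℤ} (hA : Aᵀ = A)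
    (hd : ∀ i, A i i = 0) (x : Fin n → ℤ) : (2 : ℤ) ∣ x ⬝ᵥ (A *ᵥ x) := by
  have := sym_sum Finset.univ (fun i j => x i * (A i j * x j)) (fun i j => by
    rw [← congrFun (congrFun hA i) j, transpose_apply]; ring)
  simpa [dotProduct, mulVec, Finset.mul_sum, hd] using this

/-- The walk counts `eᵀ A ^ a e` are even for `a ≥ 1`: odd `a` gives an alternating form,
and `eᵀ A ^ (2k) e = |A ^ k e|² ≡ eᵀ A ^ k e` mod `2`. -/
theorem walk_even {n : ℕ} {A : Matrix (Fin n) (Fin n) ℤ} (hA : Aᵀ = A)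
    (hd : ∀ i, A i i = 0) (a : ℕ) (ha : 1 ≤ a) : (2 : ℤ) ∣ 1 ⬝ᵥ (A ^ a *ᵥ 1) := by
  induction a using Nat.strong_induction_on with
  | _ a ih =>
    rcases Nat.even_or_odd' a with ⟨k, rfl | rfl⟩
    · rw [two_mul, ← walk_dot hA]
      have h1 := ih k (by omega) (by omega)
      have h2 : (2 : ℤ) ∣ (A ^ k *ᵥ 1) ⬝ᵥ (A ^ k *ᵥ 1) - 1 ⬝ᵥ (A ^ k *ᵥ 1) := by
        simp only [dotProduct, ← Finset.sum_sub_distrib]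
        refine Finset.dvd_sum fun i _ => ?_
        rw [← sub_mul, Pi.one_apply, mul_comm]
        exact (Int.even_mul_pred_self _).two_dvd
      exact (Int.dvd_iff_dvd_of_dvd_sub h2).2 h1
    · have := quad_even hA hd (A ^ k *ᵥ 1)
      rwa [mulVec_mulVec, ← pow_succ', walk_dot hA, ← add_assoc, ← two_mul] at this

/-! ### The Krylov module of the all-ones vector over `ZMod 2` -/

/-- `q(A) e` over `ZMod 2`, for a polynomial `q` over `ZMod 2`. -/
noncomputable def kry {n : ℕ} (A : Matrix (Fin n) (Fin n) ℤ) (q : (ZMod 2)[X]) :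
    Fin n → ZMod 2 :=
  aeval (A.map (Int.castRingHom (ZMod 2))) q *ᵥ 1

theorem kry_X_pow {n : ℕ} (A : Matrix (Fin n) (Fin n) ℤ) (k : ℕ) (i : Fin n) :
    kry A (X ^ k) i = (((A ^ k *ᵥ 1) i : ℤ) : ZMod 2) := by
  have := RingHom.map_mulVec (Int.castRingHom (ZMod 2)) (A ^ k) 1 i
  simp only [eq_intCast] at this
  rw [this, Matrix.map_pow, kry, map_pow, aeval_X]
  congr 1

theorem kry_sum {n : ℕ} (A : Matrix (Fin n) (Fin n) ℤ) {ι : Type*} (S : Finset ι)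
    (c : ι → ℤ) (f : ι → ℕ) (i : Fin n) :
    kry A (∑ j ∈ S, C ((c j : ℤ) : ZMod 2) * X ^ f j) i
      = ((∑ j ∈ S, c j * (A ^ f j *ᵥ 1) i : ℤ) : ZMod 2) := by
  have h (j : ι) : kry A (C ((c j : ℤ) : ZMod 2) * X ^ f j) i
      = ((c j * (A ^ f j *ᵥ 1) i : ℤ) : ZMod 2) := by
    rw [Int.cast_mul, ← kry_X_pow, ← smul_eq_C_mul, kry, kry, map_smul, smul_mulVec]; rfl
  rw [Int.cast_sum, ← Finset.sum_congr rfl fun j _ => h j]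
  simp only [kry, map_sum, sum_mulVec, Finset.sum_apply]

theorem kry_mul {n : ℕ} (A : Matrix (Fin n) (Fin n) ℤ) (p q : (ZMod 2)[X]) :
    kry A (p * q) = aeval (A.map (Int.castRingHom (ZMod 2))) p *ᵥ kry A q := by
  simp [kry, mulVec_mulVec]

/-- The vectors `A ^ (j + s) e` mod `2` are pairwise orthogonal and self-orthogonal, so they span
a space of dimension at most `n / 2`; hence `m + 1` of them are linearly dependent. -/
theorem exists_annihilator {n m s : ℕ} (hn : n ≤ 2 * m + 1) {A : Matrix (Fin n) (Fin n) ℤ}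
    (hA : Aᵀ = A) (hev : ∀ a, s ≤ a → (2 : ℤ) ∣ 1 ⬝ᵥ (A ^ a *ᵥ 1)) :
    ∃ g : (ZMod 2)[X], g ≠ 0 ∧ g.natDegree ≤ m ∧ kry A (g * X ^ s) = 0 := by
  let M : Matrix (Fin n) (Fin (m + 1)) (ZMod 2) := Matrix.of fun i j => kry A (X ^ (j + s : ℕ)) i
  have hM : Mᵀ * M = 0 := by
    ext i j
    have := hev ((i + s) + (j + s)) (by omega)
    rw [← walk_dot hA] at this
    replace this := (ZMod.intCast_zmod_eq_zero_iff_dvd _ 2).2 this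
    simpa [Matrix.mul_apply, M, kry_X_pow, dotProduct] using this
  have hr : M.rank ≤ m := by
    have := Matrix.rank_add_rank_le_card_of_mul_eq_zero hM
    rw [rank_transpose] at this
    simp at this
    omega
  obtain ⟨c, hc, hc0⟩ : ∃ c : Fin (m + 1) → ZMod 2, M *ᵥ c = 0 ∧ c ≠ 0 := by
    by_contra! hcon
    have hinj : Function.Injective M.mulVecLin :=
      (injective_iff_map_eq_zero _).2 fun c hc => hcon c (by simpa using hc)
    have := LinearMap.finrank_range_of_inj hinj
    rw [Matrix.rank, this] at hr
    simp at hr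
  refine ⟨∑ j : Fin (m + 1), C (c j) * X ^ (j : ℕ), ?_, ?_, ?_⟩
  · intro h0
    apply hc0
    ext j
    have := congrArg (fun p => p.coeff (j : ℕ)) h0
    simpa [finsetSum_coeff, coeff_C_mul, coeff_X_pow, Fin.val_inj] using this
  · refine natDegree_sum_le_of_forall_le _ _ fun j _ => ?_
    exact (natDegree_C_mul_X_pow_le _ _).trans (by omega)
  · have h2 : (∑ j : Fin (m + 1), C (c j) * X ^ (j : ℕ)) * X ^ s
        = ∑ j : Fin (m + 1), C (((c j).val : ℤ) : ZMod 2) * X ^ (j + s : ℕ) := by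
      rw [Finset.sum_mul]
      refine Finset.sum_congr rfl fun j _ => ?_
      simp [pow_add, mul_assoc]
    ext i
    rw [h2, kry_sum]
    have := congrFun hc i
    simpa [M, mulVec, dotProduct, kry_X_pow, mul_comm] using this

/-! ### The Gram matrix of the walk matrix -/

/-- The walk matrix `[e, Ae, …, A^(n-1) e]` of an arbitrary integer matrix `A`. -/
def walkMat {n : ℕ} (A : Matrix (Fin n) (Fin n) ℤ) : Matrix (Fin n) (Fin n) ℤ :=
  Matrix.of fun i j => (A ^ (j : ℕ) *ᵥ 1) i

theorem walkMat_tmul {n : ℕ} (A : Matrix (Fin n) (Fin n) ℤ) (x : Fin n → ℤ) (i : Fin n) :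
    ((walkMat A)ᵀ *ᵥ x) i = (A ^ (i : ℕ) *ᵥ 1) ⬝ᵥ x := rfl

/-- With `s = n % 2`, the Gram matrix `Wᵀ W` is even in all rows except possibly the first
`s` rows. Dividing the even rows by `2` leaves a matrix of determinant `det W ^ 2 / 2 ^ (2m)`,
which is odd because `2 ^ (m + 1) ∤ det W`. -/
theorem exists_scaled_gram {n m s : ℕ} (hs : s ≤ 1) (hn : n = 2 * m + s)
    {A : Matrix (Fin n) (Fin n) ℤ} (hA : Aᵀ = A)
    (hev : ∀ a, s ≤ a → (2 : ℤ) ∣ 1 ⬝ᵥ (A ^ a *ᵥ 1))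
    (hW : ¬ (2 : ℤ) ^ (m + 1) ∣ (walkMat A).det) :
    ∃ K : Matrix (Fin n) (Fin n) ℤ, ¬ (2 : ℤ) ∣ K.det ∧
      (walkMat A)ᵀ * walkMat A = diagonal (fun i : Fin n => if (i : ℕ) < s then 1 else 2) * K := by
  have hH (i j : Fin n) : ((walkMat A)ᵀ * walkMat A) i j = 1 ⬝ᵥ (A ^ (i + j : ℕ) *ᵥ 1) := by
    rw [← walk_dot hA]; rfl
  let K : Matrix (Fin n) (Fin n) ℤ := Matrix.of fun i j =>
    ((walkMat A)ᵀ * walkMat A) i j / (if (i : ℕ) < s then 1 else 2)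
  have hK : (walkMat A)ᵀ * walkMat A
      = diagonal (fun i : Fin n => if (i : ℕ) < s then 1 else 2) * K := by
    ext i j
    rw [diagonal_mul]
    simp only [K, of_apply]
    split_ifs with h
    · simp
    · refine (Int.mul_ediv_cancel' ?_).symm
      rw [hH]
      exact hev _ (by omega)
  refine ⟨K, ?_, hK⟩
  have hdet := congrArg det hK
  have hprod : ∏ i : Fin n, (if (i : ℕ) < s then (1 : ℤ) else 2) = (2 ^ m) ^ 2 := by
    rw [← pow_mul, mul_comm m]
    subst hn
    interval_cases s
    · simp
    · rw [Fin.prod_univ_succ]; simp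
  rw [det_mul, det_transpose, det_mul, det_diagonal, hprod, ← sq] at hdet
  obtain ⟨t, ht⟩ := (Int.pow_dvd_pow_iff two_ne_zero).1 (Dvd.intro _ hdet.symm)
  intro h2
  have h3 : t ^ 2 = K.det := by
    rw [ht, mul_pow] at hdet
    exact mul_left_cancel₀ (by positivity) hdet
  rw [← h3] at h2
  obtain ⟨r, hr⟩ := Int.prime_two.dvd_of_dvd_pow h2
  exact hW ⟨r, by rw [ht, hr]; ring⟩

theorem dvd_of_dvd_mulVec {n : ℕ} {K : Matrix (Fin n) (Fin n) ℤ} (hK : ¬ (2 : ℤ) ∣ K.det)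
    {c : Fin n → ℤ} (hc : ∀ i, (2 : ℤ) ∣ (K *ᵥ c) i) (i : Fin n) : (2 : ℤ) ∣ c i := by
  have h : (K.adjugate *ᵥ (K *ᵥ c)) i = K.det * c i := by
    rw [mulVec_mulVec, adjugate_mul, smul_mulVec, one_mulVec]; rfl
  have h2 : (2 : ℤ) ∣ (K.adjugate *ᵥ (K *ᵥ c)) i := by
    rw [mulVec, dotProduct]
    exact Finset.dvd_sum fun j _ => Dvd.dvd.mul_left (hc j) _
  rw [h] at h2
  exact (Int.prime_two.dvd_or_dvd h2).resolve_left hK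

/-- A vector orthogonal mod `2` to all walk vectors is, mod `2`, a combination of the `m`
consecutive walk vectors `A ^ s e, …, A ^ (s + m - 1) e`. -/
theorem exists_short {n m s : ℕ} (hs : s ≤ 1) (hn : n = 2 * m + s)
    {A : Matrix (Fin n) (Fin n) ℤ} (hA : Aᵀ = A)
    (hev : ∀ a, s ≤ a → (2 : ℤ) ∣ 1 ⬝ᵥ (A ^ a *ᵥ 1))
    (hdet : (walkMat A).det ≠ 0) {K : Matrix (Fin n) (Fin n) ℤ} (hK : ¬ (2 : ℤ) ∣ K.det)
    (hWK : (walkMat A)ᵀ * walkMat A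
      = diagonal (fun i : Fin n => if (i : ℕ) < s then 1 else 2) * K)
    {v : Fin n → ℤ} (hv : ∀ k, (2 : ℤ) ∣ (A ^ k *ᵥ 1) ⬝ᵥ v) :
    ∃ y : ℕ → ℤ, ∀ i, (2 : ℤ) ∣ v i - ∑ j ∈ Finset.range m, y j * (A ^ (j + s) *ᵥ 1) i := by
  have hd (i : Fin n) : (if (i : ℕ) < s then (1 : ℤ) else 2) ∣ (A ^ (i : ℕ) *ᵥ 1) ⬝ᵥ v := by
    split_ifs
    · exact one_dvd _
    · exact hv _
  choose b hb using hd
  -- `Wᵀ v = D b` and `Wᵀ W = D K` give `(det K) v = W (adj K) b`, and `det K` is odd.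
  set c := K.adjugate *ᵥ b with hc
  have hKc : K *ᵥ c = K.det • b := by
    rw [hc, mulVec_mulVec, mul_adjugate, smul_mulVec, one_mulVec]
  have hWc : walkMat A *ᵥ c = K.det • v := by
    have hz : (walkMat A)ᵀ *ᵥ (walkMat A *ᵥ c - K.det • v) = 0 := by
      rw [mulVec_sub, mulVec_mulVec, hWK, ← mulVec_mulVec, hKc, mulVec_smul, mulVec_smul,
        ← smul_sub]
      convert smul_zero _
      ext i
      rw [Pi.sub_apply, walkMat_tmul, hb, mulVec_diagonal, sub_self]; rfl
    exact sub_eq_zero.1 (eq_zero_of_mulVec_eq_zero (by rwa [det_transpose]) hz)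
  -- For odd `n`, the vector `e` itself does not occur: its coefficient is even.
  have hlow (hs1 : s = 1) (h0 : 0 < n) : (2 : ℤ) ∣ c ⟨0, h0⟩ := by
    subst hs1
    have h1 := congrFun hWK ⟨0, h0⟩
    have hrow (j : Fin n) : K ⟨0, h0⟩ j = 1 ⬝ᵥ (A ^ (j : ℕ) *ᵥ 1) := by
      have := congrFun h1 j
      rw [diagonal_mul] at this
      simp only [zero_lt_one, if_true, one_mul] at this
      rw [← this, ← zero_add (j : ℕ), ← walk_dot hA]; rfl
    have hb0 : (2 : ℤ) ∣ b ⟨0, h0⟩ := by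
      have := hb ⟨0, h0⟩
      simp only [zero_lt_one, if_true, one_mul] at this
      rw [← this]; exact hv 0
    have h2 := congrFun hKc ⟨0, h0⟩
    have h3 : (2 : ℤ) ∣ K ⟨0, h0⟩ ⟨0, h0⟩ * c ⟨0, h0⟩ := by
      have h4 : ∑ j, K ⟨0, h0⟩ j * c j = K.det * b ⟨0, h0⟩ := h2
      rw [← Finset.add_sum_erase _ _ (Finset.mem_univ (⟨0, h0⟩ : Fin n))] at h4
      refine (dvd_add_left (Finset.dvd_sum fun j hj => ?_)).1 (h4 ▸ hb0.mul_left _)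
      have hj0 : (j : ℕ) ≠ 0 := fun h => (Finset.ne_of_mem_erase hj) (Fin.ext h)
      rw [hrow]
      exact (hev _ (by omega)).mul_right _
    refine (Int.prime_two.dvd_or_dvd h3).resolve_left ?_
    rw [hrow]
    simp [hn]
  obtain ⟨g, hg0, hgm, hg⟩ := exists_annihilator (n := n) (m := m) (by omega) hA hev
  let q₀ : (ZMod 2)[X] := ∑ j : Fin n, C ((c j : ℤ) : ZMod 2) * X ^ (j : ℕ)
  have hq₀ (i : Fin n) : kry A q₀ i = ((v i : ℤ) : ZMod 2) := by
    have h1 := congrFun hWc i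
    have hodd : ((K.det : ℤ) : ZMod 2) = 1 := by
      have h0 : ((K.det : ℤ) : ZMod 2) ≠ 0 :=
        fun h => hK ((ZMod.intCast_zmod_eq_zero_iff_dvd _ 2).1 h)
      generalize ((K.det : ℤ) : ZMod 2) = x at h0
      revert x
      decide
    rw [kry_sum]
    have h2 : ∑ j : Fin n, c j * (A ^ (j : ℕ) *ᵥ 1) i = K.det * v i := by
      rw [← smul_eq_mul, ← Pi.smul_apply, ← h1]
      exact Finset.sum_congr rfl fun j _ => mul_comm _ _
    rw [h2, Int.cast_mul, hodd, one_mul]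
  obtain ⟨q, hq⟩ : X ^ s ∣ q₀ := by
    interval_cases s
    · simp
    · rw [pow_one, X_dvd_iff]
      simp only [q₀, finsetSum_coeff, coeff_C_mul, coeff_X_pow]
      refine Finset.sum_eq_zero fun j _ => ?_
      split_ifs with h
      · rw [mul_one]
        refine (ZMod.intCast_zmod_eq_zero_iff_dvd _ 2).2 ?_
        have := hlow rfl (by omega)
        rwa [show j = ⟨0, by omega⟩ from Fin.ext h.symm]
      · simp
  -- Reduction modulo the annihilator `g` of `A ^ s e` leaves at most `m` terms.
  set r := q % g
  have hr : kry A (r * X ^ s) = kry A q₀ := by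
    have : q₀ = q / g * (g * X ^ s) + r * X ^ s := by
      rw [hq]
      conv_lhs => rw [← EuclideanDomain.div_add_mod q g]
      ring
    rw [this]
    have hadd (p p' : (ZMod 2)[X]) : kry A (p + p') = kry A p + kry A p' := by
      simp [kry, add_mulVec]
    rw [hadd, kry_mul A (q / g), hg, mulVec_zero, zero_add]
  have hrdeg : r.degree < m := (EuclideanDomain.mod_lt q hg0 : r.degree < g.degree).trans_le
    (natDegree_le_iff_degree_le.1 hgm)
  refine ⟨fun j => ((r.coeff j).val : ℤ), fun i => ?_⟩
  refine (ZMod.intCast_zmod_eq_zero_iff_dvd _ 2).1 ?_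
  have h1 : r = ∑ j ∈ Finset.range m, C (r.coeff j) * X ^ j := by
    ext l
    simp only [finsetSum_coeff, coeff_C_mul, coeff_X_pow, mul_ite, mul_one, mul_zero,
      Finset.sum_ite_eq, Finset.mem_range]
    split_ifs with hl
    · rfl
    · exact coeff_eq_zero_of_degree_lt (hrdeg.trans_le (by exact_mod_cast not_lt.1 hl))
  have h2 : r * X ^ s
      = ∑ j ∈ Finset.range m, C (((r.coeff j).val : ℤ) : ZMod 2) * X ^ (j + s) := by
    conv_lhs => rw [h1, Finset.sum_mul]
    refine Finset.sum_congr rfl fun j _ => ?_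
    simp [pow_add, mul_assoc]
  rw [Int.cast_sub, ← hq₀, ← kry_sum A _ (fun j => ((r.coeff j).val : ℤ)), ← hr, h2, sub_self]

/-- The heart of the argument: if `v` is orthogonal mod `2` to all walk vectors `A ^ k e`, and
`vᵀ A ^ k v ≡ 0` mod `4` for all `k`, then `v ≡ 0` mod `2`. -/
theorem even_of_congruences {n : ℕ} {A : Matrix (Fin n) (Fin n) ℤ} (hA : Aᵀ = A)
    (hd : ∀ i, A i i = 0) (hdet : (walkMat A).det ≠ 0)
    (hW : ¬ (2 : ℤ) ^ (n / 2 + 1) ∣ (walkMat A).det)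
    {v : Fin n → ℤ} (hv : ∀ k, (2 : ℤ) ∣ (A ^ k *ᵥ 1) ⬝ᵥ v)
    (hv4 : ∀ k, (4 : ℤ) ∣ v ⬝ᵥ (A ^ k *ᵥ v)) (i : Fin n) : (2 : ℤ) ∣ v i := by
  obtain ⟨m, s, hs, hn⟩ : ∃ m s, s ≤ 1 ∧ n = 2 * m + s :=
    ⟨n / 2, n % 2, by omega, by omega⟩
  rw [show n / 2 = m by omega] at hW
  have hev (a : ℕ) (ha : s ≤ a) : (2 : ℤ) ∣ 1 ⬝ᵥ (A ^ a *ᵥ 1) := by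
    rcases Nat.eq_zero_or_pos a with rfl | ha'
    · simp [hn]
      omega
    · exact walk_even hA hd a ha'
  obtain ⟨K, hK, hWK⟩ := exists_scaled_gram hs hn hA hev hW
  obtain ⟨y, hy⟩ := exists_short hs hn hA hev hdet hK hWK hv
  set u : Fin n → ℤ := ∑ j ∈ Finset.range m, y j • (A ^ (j + s) *ᵥ 1) with hu
  have hui (i : Fin n) : u i = ∑ j ∈ Finset.range m, y j * (A ^ (j + s) *ᵥ 1) i := by
    simp [hu]
  choose z hz using hy
  have hvu : v = u + (2 : ℤ) • z := by
    ext i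
    have := hz i
    rw [← hui] at this
    simp only [Pi.add_apply, Pi.smul_apply, smul_eq_mul]
    linarith
  have hu4 (k : ℕ) : (4 : ℤ) ∣ u ⬝ᵥ (A ^ k *ᵥ u) := by
    have h1 := hv4 k
    have h2 : v ⬝ᵥ (A ^ k *ᵥ v)
        = u ⬝ᵥ (A ^ k *ᵥ u) + 4 * (z ⬝ᵥ (A ^ k *ᵥ u) + z ⬝ᵥ (A ^ k *ᵥ z)) := by
      have h3 : u ⬝ᵥ (A ^ k *ᵥ z) = z ⬝ᵥ (A ^ k *ᵥ u) := by
        rw [← dot_pow hA, dotProduct_comm]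
      simp only [hvu, mulVec_add, mulVec_smul, dotProduct_add, add_dotProduct, smul_dotProduct,
        dotProduct_smul, smul_eq_mul, h3]
      ring
    rw [h2] at h1
    exact (dvd_add_left (dvd_mul_right _ _)).1 h1
  -- The off-diagonal terms of `uᵀ A ^ k u` come in equal pairs of even numbers, so only the
  -- diagonal survives mod `4`.
  have hdiag (k : ℕ) : (4 : ℤ) ∣
      ∑ j ∈ Finset.range m, 1 ⬝ᵥ (A ^ (k + 2 * (j + s)) *ᵥ 1) * y j ^ 2 := by
    have h1 : u ⬝ᵥ (A ^ k *ᵥ u) = ∑ i ∈ Finset.range m, ∑ j ∈ Finset.range m,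
        y i * y j * 1 ⬝ᵥ (A ^ (k + (i + s) + (j + s)) *ᵥ 1) := by
      simp only [hu, mulVec_sum, sum_dotProduct, dotProduct_sum, mulVec_smul, smul_dotProduct,
        dotProduct_smul, mulVec_mulVec, ← pow_add, walk_dot hA, smul_eq_mul, Finset.mul_sum]
      rw [Finset.sum_comm]
      refine Finset.sum_congr rfl fun i _ => Finset.sum_congr rfl fun j _ => ?_
      rw [show i + s + (k + (j + s)) = k + (i + s) + (j + s) by ring]
      ring
    have h2 (i j : ℕ) : (2 : ℤ) ∣ 1 ⬝ᵥ (A ^ (k + (i + s) + (j + s)) *ᵥ 1) :=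
      hev _ (by omega)
    choose F hF using h2
    have hsym (i j : ℕ) : F i j = F j i := by
      have := hF i j
      rw [show k + (i + s) + (j + s) = k + (j + s) + (i + s) by ring, hF] at this
      linarith
    obtain ⟨t, ht⟩ := sym_sum (Finset.range m) (fun i j => y i * y j * F i j)
      (fun i j => by rw [hsym i j]; ring)
    obtain ⟨w, hw⟩ := hu4 k
    rw [h1] at hw
    have h3 : ∑ i ∈ Finset.range m, ∑ j ∈ Finset.range m,
        y i * y j * 1 ⬝ᵥ (A ^ (k + (i + s) + (j + s)) *ᵥ 1)
        = 2 * ∑ i ∈ Finset.range m, ∑ j ∈ Finset.range m, y i * y j * F i j := by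
      simp only [Finset.mul_sum, hF]
      refine Finset.sum_congr rfl fun i _ => Finset.sum_congr rfl fun j _ => ?_
      ring
    have h4 : ∑ j ∈ Finset.range m, 1 ⬝ᵥ (A ^ (k + 2 * (j + s)) *ᵥ 1) * y j ^ 2
        = 2 * ∑ i ∈ Finset.range m, y i * y i * F i i := by
      simp only [Finset.mul_sum]
      refine Finset.sum_congr rfl fun i _ => ?_
      rw [show k + 2 * (i + s) = k + (i + s) + (i + s) by ring, hF]
      ring
    rw [h4]
    rw [h3] at hw
    exact ⟨w - t, by linarith⟩
  -- `c` is the coefficient vector of `∑ j, y_j² A ^ (2 (j + s)) e`; these exponents stay below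
  -- `n`, so the diagonal sums are the entries of `Wᵀ W c`.
  let c : Fin n → ℤ := fun l =>
    ∑ j ∈ Finset.range m, if (l : ℕ) = 2 * (j + s) then y j ^ 2 else 0
  have hHc (k : Fin n) : (((walkMat A)ᵀ * walkMat A) *ᵥ c) k
      = ∑ j ∈ Finset.range m, 1 ⬝ᵥ (A ^ (k + 2 * (j + s)) *ᵥ 1) * y j ^ 2 := by
    have hH (l : Fin n) : ((walkMat A)ᵀ * walkMat A) k l = 1 ⬝ᵥ (A ^ (k + l : ℕ) *ᵥ 1) := by
      rw [← walk_dot hA]; rfl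
    simp only [mulVec, dotProduct, c] at hH ⊢
    simp only [hH, Finset.mul_sum]
    rw [Finset.sum_comm]
    refine Finset.sum_congr rfl fun j hj => ?_
    have hj' := Finset.mem_range.1 hj
    rw [Finset.sum_eq_single (⟨2 * (j + s), by omega⟩ : Fin n)]
    · simp
    · intro l _ hl
      rw [if_neg fun h => hl (Fin.ext h), mul_zero]
    · simp
  have hc : ∀ l, (2 : ℤ) ∣ c l := dvd_of_dvd_mulVec hK fun k => by
    have h1 := hdiag k
    rw [← hHc, hWK, ← mulVec_mulVec, mulVec_diagonal] at h1
    split_ifs at h1 <;> omega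
  have hyj (j : ℕ) (hj : j < m) : (2 : ℤ) ∣ y j := by
    have h1 := hc ⟨2 * (j + s), by omega⟩
    have h2 : c ⟨2 * (j + s), by omega⟩ = y j ^ 2 := by
      simp only [c]
      rw [Finset.sum_eq_single j]
      · simp
      · intro l _ hl
        rw [if_neg (by omega)]
      · simp [hj]
    rw [h2] at h1
    exact Int.prime_two.dvd_of_dvd_pow h1
  rw [hvu]
  refine dvd_add ?_ (dvd_mul_right _ _)
  rw [hui]
  exact Finset.dvd_sum fun j hj => (hyj j (Finset.mem_range.1 hj)).mul_right _

/-! ### Application to the columns of `ℓQ` -/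

/-- **Theorem 2.6 (Wang).** Let `G` be a controllable graph with walk matrix `W` and let
`Q ∈ 𝒬_G` have level `ℓ`.  If `2^{⌊n/2⌋+1} ∤ det(W)`, then `2 ∤ ℓ`. -/
theorem two_pow_not_dvd_detW_imp_two_not_dvd_level {n : ℕ} (G : SimpleGraph (Fin n))
    [DecidableRel G.Adj] (hctrl : (walkMatrix G).det ≠ 0)
    (Q : Matrix (Fin n) (Fin n) ℚ) (hQ : MemQG G Q) (ℓ : ℕ) (hℓ : IsLevel Q ℓ)
    (hndvd : ¬ (2 : ℤ) ^ (n / 2 + 1) ∣ (walkMatrix G).det) :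
    ¬ 2 ∣ ℓ := by
  rintro ⟨m, rfl⟩
  obtain ⟨hpos, hint, hmin⟩ := hℓ
  obtain ⟨hQQ, hQe, hB⟩ := hQ
  -- `V = ℓQ` is an integer matrix; all its entries turn out to be even, so `ℓ / 2` already
  -- clears the denominators of `Q`, against the minimality of `ℓ`.
  choose U hU using hint
  let ι : ℤ →+* ℚ := Int.castRingHom ℚ
  have hUQ : (Matrix.of U).map ι = ((2 * m : ℕ) : ℚ) • Q := by
    ext i j; exact (hU i j).symm
  have hinj : Function.Injective fun M : Matrix (Fin n) (Fin n) ℤ => M.map ι :=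
    Matrix.map_injective Int.cast_injective
  obtain ⟨B, hBQ⟩ : ∃ B : Matrix (Fin n) (Fin n) ℤ, B.map ι = Qᵀ * G.adjMatrix ℚ * Q := by
    choose f hf using fun i j => show ∃ z : ℤ, (z : ℚ) = (Qᵀ * G.adjMatrix ℚ * Q) i j from
      (hB i j).elim (fun h => ⟨0, by simp [h]⟩) (fun h => ⟨1, by simp [h]⟩)
    exact ⟨Matrix.of f, by ext i j; exact hf i j⟩
  have hAι : (G.adjMatrix ℤ).map ι = G.adjMatrix ℚ := by
    ext i j; simp [SimpleGraph.adjMatrix_apply, apply_ite]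
  set V : Matrix (Fin n) (Fin n) ℤ := Matrix.of U with hV
  set A := G.adjMatrix ℤ with hAdef
  have hVV : Vᵀ * V = ((2 * m : ℕ) : ℤ) ^ 2 • (1 : Matrix (Fin n) (Fin n) ℤ) := by
    apply hinj
    have hT : Vᵀ.map ι = (((2 * m : ℕ) : ℚ) • Q)ᵀ := by rw [← hUQ]; rfl
    simp only [Matrix.map_mul, hT, hUQ]
    rw [transpose_smul, smul_mul_smul_comm, hQQ]
    ext i j
    rw [Matrix.map_apply, Matrix.smul_apply, Matrix.smul_apply]
    by_cases h : i = j
    · subst h; simp [sq, ι]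
    · simp [h, ι]
  have hAV : A * V = V * B := by
    apply hinj
    have h1 : Q * Qᵀ = 1 := mul_eq_one_comm.1 hQQ
    simp only [Matrix.map_mul, hUQ, hAι, hBQ]
    rw [Matrix.smul_mul, Matrix.mul_smul, Matrix.mul_assoc Qᵀ, ← Matrix.mul_assoc Q, h1, Matrix.one_mul]
  have hAkV (k : ℕ) : A ^ k * V = V * B ^ k := by
    induction k with
    | zero => simp
    | succ k ih => rw [pow_succ, Matrix.mul_assoc, hAV, ← Matrix.mul_assoc, ih, Matrix.mul_assoc,
        ← pow_succ]
  have hVe (j : Fin n) : (1 ᵥ* V) j = ((2 * m : ℕ) : ℤ) := by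
    have h1 : Qᵀ *ᵥ (fun _ => 1) = fun _ => 1 := by
      conv_lhs => rw [← hQe, mulVec_mulVec, hQQ, one_mulVec]
    have h2 := congrFun h1 j
    simp only [mulVec, dotProduct, mul_one, transpose_apply] at h2
    have h3 : (((1 ᵥ* V) j : ℤ) : ℚ) = ((2 * m : ℕ) : ℚ) * ∑ i, Q i j := by
      simp only [vecMul, dotProduct, Pi.one_apply, one_mul, Int.cast_sum, Finset.mul_sum]
      exact Finset.sum_congr rfl fun i _ => (hU i j).symm
    rw [h2, mul_one] at h3
    exact_mod_cast h3
  have hAt : Aᵀ = A := SimpleGraph.transpose_adjMatrix G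
  have hall (i j : Fin n) : (2 : ℤ) ∣ V i j := by
    -- `V` intertwines `A` with the integer matrix `B` and `Vᵀ V = ℓ²`, `eᵀ V = ℓ eᵀ`, so its
    -- columns satisfy both congruences required by `even_of_congruences`.
    refine even_of_congruences (A := A) hAt (fun i => by simp [hAdef]) hctrl hndvd (v := fun i => V i j)
      (fun k => ?_) (fun k => ?_) i
    · have h1 : (A ^ k *ᵥ 1) ⬝ᵥ (fun i => V i j) = ((1 ᵥ* V) ᵥ* B ^ k) j := by
        rw [vecMul_vecMul, ← hAkV, ← vecMul_vecMul, dot_pow hAt, dotProduct_mulVec]; rfl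
      rw [h1, vecMul, dotProduct]
      refine Finset.dvd_sum fun l _ => Dvd.dvd.mul_right ?_ _
      rw [hVe]
      exact ⟨m, by push_cast; rfl⟩
    · have h1 : (fun i => V i j) ⬝ᵥ (A ^ k *ᵥ fun i => V i j) = (Vᵀ * (A ^ k * V)) j j := rfl
      rw [h1, hAkV, ← Matrix.mul_assoc, hVV, Matrix.smul_mul, Matrix.one_mul, Matrix.smul_apply]
      exact ⟨(m : ℤ) ^ 2 * (B ^ k) j j, by push_cast; rw [smul_eq_mul]; ring⟩
  have hm := hmin m (by omega) fun i j => by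
    obtain ⟨t, ht⟩ := hall i j
    refine ⟨t, ?_⟩
    have h1 := hU i j
    have h2 : ((U i j : ℤ) : ℚ) = 2 * t := by exact_mod_cast ht
    rw [h2] at h1
    simp only [Matrix.smul_apply, smul_eq_mul, Nat.cast_mul, Nat.cast_ofNat] at h1 ⊢
    linarith
  omega
end

section
/- Let A be an n×n symmetric integer matrix with characteristic polynomial φ(x), and let Q be an n×n rational orthogonal matrix of level ℓ such that Q^T A Q is a symmetric integer matrix. Then for every prime p dividing ℓ, the polynomial φ(x), reduced modulo p, has a multiple (repeated) irreducible factor over F_p. -/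
/-!
Put `R = ℓQ`, an integer matrix, and `B = QᵀAQ`. Then `RᵀR = ℓ²I` and `AR = RB`; minimality of `ℓ`
forces `R` to be nonzero modulo `p`. Hence over the algebraic closure `K` of `𝔽_p` the column space
of `R` is nonzero, invariant under `A` and totally isotropic for the standard dot product, so `A`
has an eigenvector `v` with `v ⬝ᵥ v = 0` (`exists_isotropic_eigenvector`).

Its eigenvalue `μ` is a multiple root of the characteristic polynomial
(`one_lt_rootMultiplicity_of_isotropic`): otherwise the generalized eigenspace of `μ` is the line
spanned by `v`, and by Fitting's decomposition every vector is the sum of a multiple of `v` and a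
vector in the range of `A - μ`. As `A` is symmetric, `v` is orthogonal to both, so `v = 0`.
Since `𝔽_p` is perfect, a polynomial over it with a multiple root in `K` is not squarefree.
-/

open Polynomial Matrix

/-- An isotropic eigenvector of a symmetric matrix belongs to an eigenvalue which is not a simple
root of the characteristic polynomial. -/
lemma one_lt_rootMultiplicity_of_isotropic {K : Type*} [Field K] {n : ℕ}
    {M : Matrix (Fin n) (Fin n) K} (hM : M.IsSymm) {v : Fin n → K} (hv : v ≠ 0)
    (hvv : v ⬝ᵥ v = 0) {μ : K} (hμ : M *ᵥ v = μ • v) :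
    1 < M.charpoly.rootMultiplicity μ := by
  by_contra! hle
  set T : Module.End K (Fin n → K) := Matrix.toLin' M with hT
  set f : Module.End K (Fin n → K) := T - μ • 1 with hf
  rw [← Matrix.charpoly_toLin', ← hT, ← LinearMap.finrank_maxGenEigenspace_eq] at hle
  have hmem : v ∈ T.maxGenEigenspace μ :=
    Module.End.mem_maxGenEigenspace _ _ _ |>.2 ⟨1, by simp [T, hμ]⟩
  have hv' : (⟨v, hmem⟩ : T.maxGenEigenspace μ) ≠ 0 := by
    simpa [Subtype.ext_iff] using hv
  have : Nontrivial (T.maxGenEigenspace μ) := ⟨_, _, hv'⟩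
  have hone : Module.finrank K (T.maxGenEigenspace μ) = 1 :=
    le_antisymm hle Module.finrank_pos
  -- symmetry of `M` makes `v` orthogonal to the range of `M - μ`
  have horth : ∀ z, v ⬝ᵥ f z = 0 := by
    intro z
    have h1 : v ⬝ᵥ (M *ᵥ z) = μ * (v ⬝ᵥ z) := by
      rw [Matrix.dotProduct_mulVec, ← Matrix.mulVec_transpose, hM.eq, hμ, smul_dotProduct,
        smul_eq_mul]
    simp [f, T, dotProduct_sub, h1]
  obtain ⟨k, hk, hk1⟩ := (f.eventually_isCompl_ker_pow_range_pow.and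
    (Filter.eventually_ge_atTop 1)).exists
  apply hv
  apply dotProduct_eq_zero
  intro x
  have hx : x ∈ LinearMap.ker (f ^ k) ⊔ LinearMap.range (f ^ k) := by
    rw [hk.sup_eq_top]; trivial
  obtain ⟨w, hw, _, ⟨y, rfl⟩, rfl⟩ := Submodule.mem_sup.1 hx
  have hw' : w ∈ T.maxGenEigenspace μ :=
    Module.End.mem_maxGenEigenspace _ _ _ |>.2 ⟨k, hw⟩
  obtain ⟨c, hc⟩ := exists_smul_eq_of_finrank_eq_one hone hv' ⟨w, hw'⟩
  have hc' : c • v = w := congrArg Subtype.val hc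
  obtain ⟨j, rfl⟩ := Nat.exists_eq_add_of_le' hk1
  rw [dotProduct_add, ← hc', dotProduct_smul, hvv, pow_succ', Module.End.mul_apply, horth]
  simp

/-- If `MP = PN` and `PᵀP = 0` with `P ≠ 0`, then the column space of `P` is `M`-invariant and
totally isotropic, so it contains an isotropic eigenvector of `M`. -/
lemma exists_isotropic_eigenvector {K : Type*} [Field K] [IsAlgClosed K] {n : ℕ}
    {M P N : Matrix (Fin n) (Fin n) K} (hP : P ≠ 0) (hPP : Pᵀ * P = 0) (hMP : M * P = P * N) :
    ∃ (v : Fin n → K) (μ : K), v ≠ 0 ∧ v ⬝ᵥ v = 0 ∧ M *ᵥ v = μ • v := by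
  set V := LinearMap.range (Matrix.toLin' P) with hV
  have hinv : ∀ x ∈ V, Matrix.toLin' M x ∈ V := by
    rintro _ ⟨y, rfl⟩
    exact ⟨N *ᵥ y, by simp [Matrix.mulVec_mulVec, hMP]⟩
  have : Nontrivial V := by
    rw [Submodule.nontrivial_iff_ne_bot, hV, Ne, LinearMap.range_eq_bot]
    simpa using hP
  obtain ⟨μ, hμ⟩ := Module.End.exists_eigenvalue ((Matrix.toLin' M).restrict hinv)
  obtain ⟨⟨v, y, rfl⟩, hv⟩ := hμ.exists_hasEigenvector
  refine ⟨_, μ, fun h => hv.2 (Subtype.ext h), ?_, ?_⟩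
  · change (P *ᵥ y) ⬝ᵥ (P *ᵥ y) = 0
    rw [Matrix.dotProduct_mulVec, ← Matrix.mulVec_transpose,
      Matrix.mulVec_mulVec, hPP]
    simp
  · exact congrArg Subtype.val hv.apply_eq_smul

lemma exists_sq_dvd_of_one_lt_rootMultiplicity {F K : Type*} [Field F] [PerfectField F] [Field K]
    [Algebra F K] {f : F[X]} (hf : f ≠ 0) {μ : K}
    (hμ : 1 < (f.map (algebraMap F K)).rootMultiplicity μ) :
    ∃ g : F[X], 0 < g.natDegree ∧ g ^ 2 ∣ f := by
  have hns : ¬ Squarefree f := fun h => by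
    have hs := (PerfectField.separable_iff_squarefree.2 h).map (f := algebraMap F K)
    exact absurd (rootMultiplicity_le_one_of_separable hs μ) (not_le.2 hμ)
  simp only [Squarefree, not_forall] at hns
  obtain ⟨g, hg, hu⟩ := hns
  refine ⟨g, Nat.pos_of_ne_zero fun h0 => hu ?_, by rwa [sq]⟩
  have hg0 : g ≠ 0 := by
    rintro rfl
    exact hf (by simpa using hg)
  exact Polynomial.isUnit_iff_degree_eq_zero.2 (by rw [Polynomial.degree_eq_natDegree hg0, h0]; rfl)

/-- **Lemma 3.2.** Let `A` be a symmetric integer matrix with characteristic polynomial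
`φ`, and `Q` a rational orthogonal matrix of level `ℓ` with `QᵀAQ` an integer matrix.
Then for every prime `p ∣ ℓ`, the reduction of `φ` mod `p` has a multiple factor over
`𝔽_p`. -/
theorem charpoly_has_multiple_factor_mod_p {n : ℕ} (A : Matrix (Fin n) (Fin n) ℤ)
    (hA : A.IsSymm) (Q : Matrix (Fin n) (Fin n) ℚ) (hQ : Qᵀ * Q = 1)
    (ℓ : ℕ) (hℓ : IsLevel Q ℓ)
    (hint : IsIntegerMatrix (Qᵀ * A.map (Int.cast : ℤ → ℚ) * Q))
    (p : ℕ) (hp : p.Prime) (hdvd : p ∣ ℓ) :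
    ∃ g : Polynomial (ZMod p), 0 < g.natDegree ∧
      g ^ 2 ∣ (A.charpoly).map (Int.castRingHom (ZMod p)) := by
  have : Fact p.Prime := ⟨hp⟩
  obtain ⟨hpos, hR, hmin⟩ := hℓ
  choose R hR using hR
  choose B hB using hint
  replace hR : (Matrix.of R).map (Int.castRingHom ℚ) = (ℓ : ℚ) • Q := by
    ext i j; simpa using (hR i j).symm
  replace hB : (Matrix.of B).map (Int.castRingHom ℚ) = Qᵀ * A.map (Int.castRingHom ℚ) * Q := by
    ext i j; exact (hB i j).symm
  generalize Matrix.of R = R at hR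
  generalize Matrix.of B = B at hB
  have hinj : Function.Injective (fun X : Matrix (Fin n) (Fin n) ℤ => X.map (Int.castRingHom ℚ)) :=
    Matrix.map_injective (Int.castRingHom ℚ).injective_int
  have hRR : Rᵀ * R = ((ℓ : ℤ) ^ 2) • (1 : Matrix (Fin n) (Fin n) ℤ) := by
    apply hinj
    simp only [Matrix.map_mul, Matrix.transpose_map, hR, Matrix.transpose_smul, Matrix.smul_mul,
      Matrix.mul_smul, hQ]
    ext i j
    simp only [Matrix.map_apply, Matrix.smul_apply, Matrix.one_apply, smul_eq_mul]
    split_ifs <;> simp [sq]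
  have hAR : A * R = R * B := by
    apply hinj
    simp only [Matrix.map_mul, hR, hB]
    simp only [Matrix.smul_mul, Matrix.mul_smul, ← Matrix.mul_assoc]
    rw [mul_eq_one_comm.1 hQ, one_mul]
  let K := AlgebraicClosure (ZMod p)
  let c : ℤ →+* K := Int.castRingHom K
  have hker : ∀ z : ℤ, c z = 0 ↔ (p : ℤ) ∣ z := fun z => CharP.intCast_eq_zero_iff K p z
  have hP : R.map c ≠ 0 := by
    intro h0
    -- if `p` divides every entry of `ℓQ`, then `(ℓ/p)Q` is already an integer matrix
    obtain ⟨m, rfl⟩ := hdvd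
    have hm : 0 < m := Nat.pos_of_mul_pos_left hpos
    have hle := hmin m hm fun i j => by
      obtain ⟨z, hz⟩ := (hker (R i j)).1 (congrFun (congrFun h0 i) j)
      refine ⟨z, ?_⟩
      have h1 := congrFun (congrFun hR i) j
      have hp0 : (p : ℚ) ≠ 0 := by exact_mod_cast hp.ne_zero
      simp [hz] at h1
      apply mul_left_cancel₀ hp0
      simp only [Matrix.smul_apply, smul_eq_mul]
      linarith
    nlinarith [hp.two_le]
  have hPP : (R.map c)ᵀ * R.map c = 0 := by
    rw [← Matrix.transpose_map, ← Matrix.map_mul, hRR]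
    ext i j
    rw [Matrix.map_apply, Matrix.zero_apply, hker, Matrix.smul_apply, smul_eq_mul]
    exact ((Int.natCast_dvd_natCast.2 hdvd).pow two_ne_zero).mul_right _
  have hMP : A.map c * R.map c = R.map c * B.map c := by
    rw [← Matrix.map_mul, ← Matrix.map_mul, hAR]
  obtain ⟨v, μ, hv, hvv, hμ⟩ := exists_isotropic_eigenvector hP hPP hMP
  have hmult := one_lt_rootMultiplicity_of_isotropic (hA.map c) hv hvv hμ
  refine exists_sq_dvd_of_one_lt_rootMultiplicity (K := K) (μ := μ)
    ((A.charpoly_monic.map _).ne_zero) ?_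
  rw [Polynomial.map_map, Subsingleton.elim ((algebraMap (ZMod p) K).comp _) c,
    ← Matrix.charpoly_map]
  exact hmult
end

section
/- Let A be an n×n symmetric integer matrix and suppose Q^T A Q is a symmetric integer matrix for some n×n rational orthogonal matrix Q of level ℓ. Then every prime factor p of ℓ divides the discriminant Δ_A of A. -/
/-! Write `M = ℓQ`, an integer matrix with `MᵀM = ℓ²` and `AM = MB`, where `B = QᵀAQ`. Modulo a
prime `p ∣ ℓ` the matrix `M` is nonzero (otherwise `ℓ / p` would clear the denominators of `Q`)
while `MᵀM = 0`, so its column space is a nonzero, totally isotropic, `A`-invariant space. Over an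
algebraic closure of `𝔽_p` that space contains an eigenvector `u` of `A` with `u ⬝ u = 0`.

Since `A` is symmetric, `u` is orthogonal to the range of `A - μ`. If the eigenvalue `μ` were a
simple root of the characteristic polynomial `φ`, then `u` would span the generalized eigenspace,
and the Fitting decomposition of `A - μ` would make `u` orthogonal to every vector
(`one_lt_rootMultiplicity_of_isotropic`). Hence `φ` and `φ'` have a common root modulo `p`, and the
norm of `φ'` in `ℤ[x]/(φ)` vanishes modulo `p` (`map_norm_eq_zero`). -/

open Polynomial Matrix

/-- An isotropic eigenvector of a symmetric matrix belongs to a multiple root of the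
characteristic polynomial. -/
theorem one_lt_rootMultiplicity_of_isotropic_s11 {K : Type*} [Field K] {n : ℕ}
    (A : Matrix (Fin n) (Fin n) K) (hA : A.IsSymm) (u : Fin n → K) (μ : K)
    (hu : u ≠ 0) (hAu : A *ᵥ u = μ • u) (huu : u ⬝ᵥ u = 0) :
    1 < A.charpoly.rootMultiplicity μ := by
  by_contra hlt
  push Not at hlt
  set f : Module.End K (Fin n → K) := A.mulVecLin - μ • 1 with hf
  have hfu : f u = 0 := by simp [hf, hAu]
  -- `u` is orthogonal to the range of `A - μ`, by symmetry.
  have hrange : ∀ z, u ⬝ᵥ f z = 0 := by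
    intro z
    have h1 : u ⬝ᵥ (A *ᵥ z) = μ * (u ⬝ᵥ z) := by
      rw [Matrix.dotProduct_mulVec, ← Matrix.mulVec_transpose, hA.eq, hAu, smul_dotProduct,
        smul_eq_mul]
    simp [hf, dotProduct_sub, h1]
  obtain ⟨k, hcompl, hk⟩ :=
    (f.eventually_isCompl_ker_pow_range_pow.and (Filter.eventually_ge_atTop 1)).exists
  obtain ⟨m, rfl⟩ : ∃ m, k = m + 1 := ⟨k - 1, by omega⟩
  have hfin : Module.finrank K (LinearMap.ker (f ^ (m + 1))) ≤ 1 := by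
    have h := Module.End.genEigenspace_nat (f := A.mulVecLin) (μ := μ) (k := m + 1)
    have h2 := LinearMap.finrank_genEigenspace_le A.mulVecLin μ (m + 1)
    rw [Matrix.charpoly_mulVecLin] at h2
    rw [hf, ← h]
    exact h2.trans hlt
  have hmem : u ∈ LinearMap.ker (f ^ (m + 1)) := by
    rw [LinearMap.mem_ker, pow_succ, Module.End.mul_apply, hfu, map_zero]
  have hspan : ∀ y ∈ LinearMap.ker (f ^ (m + 1)), ∃ c : K, c • u = y := by
    intro y hy
    have h1 : Module.finrank K (LinearMap.ker (f ^ (m + 1))) = 1 := by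
      refine le_antisymm hfin (Module.finrank_pos_iff_exists_ne_zero.2 ⟨⟨u, hmem⟩, ?_⟩)
      simpa [Subtype.ext_iff] using hu
    obtain ⟨c, hc⟩ := exists_smul_eq_of_finrank_eq_one h1
      (x := ⟨u, hmem⟩) (by simpa [Subtype.ext_iff] using hu) ⟨y, hy⟩
    exact ⟨c, congrArg Subtype.val hc⟩
  apply hu
  apply dotProduct_eq_zero
  intro x
  have hx : x ∈ LinearMap.ker (f ^ (m + 1)) ⊔ LinearMap.range (f ^ (m + 1)) := by
    rw [hcompl.sup_eq_top]; trivial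
  obtain ⟨y, hy, w, ⟨z, rfl⟩, rfl⟩ := Submodule.mem_sup.1 hx
  obtain ⟨c, rfl⟩ := hspan y hy
  rw [dotProduct_add, dotProduct_smul, huu, pow_succ', Module.End.mul_apply, hrange]
  simp

/-- A ring homomorphism that kills `a` kills its norm: by Cayley–Hamilton for multiplication by
`a`, the norm is a multiple of `a`. -/
theorem map_norm_eq_zero {S K : Type*} [CommRing S] [Module.Free ℤ S]
    [Module.Finite ℤ S] [CommRing K] (g : S →+* K) (a : S) (ha : g a = 0) :
    ((Algebra.norm ℤ a : ℤ) : K) = 0 := by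
  have hCH := LinearMap.aeval_self_charpoly (Algebra.lmul ℤ S a)
  rw [Polynomial.aeval_algHom_apply] at hCH
  have h0 : Polynomial.aeval a (LinearMap.charpoly (Algebra.lmul ℤ S a)) = 0 :=
    Algebra.lmul_injective (by rw [hCH, map_zero])
  have h1 := congrArg g h0
  rw [map_zero, aeval_def, hom_eval₂, ha, eval₂_at_zero] at h1
  rw [Algebra.norm_apply, LinearMap.det_eq_sign_charpoly_coeff]
  have h2 : (((LinearMap.charpoly (Algebra.lmul ℤ S a)).coeff 0 : ℤ) : K) = 0 := by
    simpa using h1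
  push_cast
  rw [h2, mul_zero]

/-- The column space of `M` is nonzero, invariant under `A` (as `AM = MB`) and totally isotropic
(as `MᵀM = 0`), so it contains an isotropic eigenvector of `A`. Applied to the reductions modulo
`p` of `A`, `ℓQ` and `QᵀAQ`. -/
theorem exists_multiple_root {K : Type*} [Field K] [IsAlgClosed K] {n : ℕ}
    (A M B : Matrix (Fin n) (Fin n) K) (hA : A.IsSymm) (hM : M ≠ 0) (hMM : Mᵀ * M = 0)
    (hAM : A * M = M * B) : ∃ μ, 1 < A.charpoly.rootMultiplicity μ := by
  let V := LinearMap.range M.mulVecLin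
  have hinv : ∀ x ∈ V, A.mulVecLin x ∈ V := by
    rintro _ ⟨v, rfl⟩
    exact ⟨B *ᵥ v, by simp [Matrix.mulVec_mulVec, hAM]⟩
  have : Nontrivial V := by
    rw [Submodule.nontrivial_iff_ne_bot]
    intro h
    apply hM
    have h0 := LinearMap.range_eq_bot.1 h
    ext i j
    simpa using congrFun (LinearMap.congr_fun h0 (Pi.single j 1)) i
  obtain ⟨μ, hμ⟩ := Module.End.exists_eigenvalue (A.mulVecLin.restrict hinv)
  obtain ⟨⟨u, v, hv⟩, hu⟩ := hμ.exists_hasEigenvector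
  refine ⟨μ, one_lt_rootMultiplicity_of_isotropic_s11 A hA u μ ?_ ?_ ?_⟩
  · rintro rfl
    exact hu.2 rfl
  · exact congrArg Subtype.val hu.apply_eq_smul
  · rw [← hv, Matrix.mulVecLin_apply, Matrix.dotProduct_mulVec, ← Matrix.mulVec_transpose,
      Matrix.mulVec_mulVec, hMM]
    simp

/-- **Theorem 3.3.** Let `A` be a symmetric integer matrix and suppose `QᵀAQ` is an
integer matrix for some rational orthogonal matrix `Q` of level `ℓ`.  Then every prime
factor `p` of `ℓ` divides the discriminant `Δ_A`. -/
theorem prime_factor_of_level_dvd_disc {n : ℕ} (A : Matrix (Fin n) (Fin n) ℤ)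
    (hA : A.IsSymm) (Q : Matrix (Fin n) (Fin n) ℚ) (hQ : Qᵀ * Q = 1)
    (ℓ : ℕ) (hℓ : IsLevel Q ℓ)
    (hint : IsIntegerMatrix (Qᵀ * A.map (Int.cast : ℤ → ℚ) * Q))
    (p : ℕ) (hp : p.Prime) (hdvd : p ∣ ℓ) :
    (p : ℤ) ∣ matrixDisc A := by
  choose B' hB using hint
  choose M' hM using hℓ.2.1
  let B : Matrix (Fin n) (Fin n) ℤ := Matrix.of B'
  let M : Matrix (Fin n) (Fin n) ℤ := Matrix.of M'
  have hMQ : M.map (Int.cast : ℤ → ℚ) = (ℓ : ℚ) • Q := by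
    ext i j; exact (hM i j).symm
  have hBQ : B.map (Int.cast : ℤ → ℚ) = Qᵀ * A.map (Int.cast : ℤ → ℚ) * Q := by
    ext i j; exact (hB i j).symm
  have hQ' : Q * Qᵀ = 1 := mul_eq_one_comm.1 hQ
  have hinj : Function.Injective
      (fun X : Matrix (Fin n) (Fin n) ℤ => X.map (Int.cast : ℤ → ℚ)) :=
    Matrix.map_injective Int.cast_injective
  have hmul : ∀ X Y : Matrix (Fin n) (Fin n) ℤ, (X * Y).map (Int.cast : ℤ → ℚ) =
      X.map (Int.cast : ℤ → ℚ) * Y.map (Int.cast : ℤ → ℚ) :=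
    fun X Y => Matrix.map_mul (f := Int.castRingHom ℚ)
  have hAM : A * M = M * B := by
    apply hinj
    change (A * M).map _ = (M * B).map _
    rw [hmul, hmul]
    rw [hMQ, hBQ, Matrix.mul_smul, Matrix.smul_mul, Matrix.mul_assoc Qᵀ, ← Matrix.mul_assoc Q,
      hQ', Matrix.one_mul]
  have hMM : Mᵀ * M = ((ℓ : ℤ) ^ 2) • (1 : Matrix (Fin n) (Fin n) ℤ) := by
    apply hinj
    change (Mᵀ * M).map _ = _
    rw [hmul, Matrix.transpose_map]
    rw [hMQ, Matrix.transpose_smul, Matrix.smul_mul, Matrix.mul_smul, hQ, smul_smul]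
    ext i j
    dsimp only
    rw [Matrix.map_apply, Matrix.smul_apply, Matrix.smul_apply, Matrix.one_apply, Matrix.one_apply]
    split_ifs <;> simp [sq]
  have := Fact.mk hp
  let K := AlgebraicClosure (ZMod p)
  have : CharP K p := charP_of_injective_algebraMap (algebraMap (ZMod p) K).injective p
  let r := Int.castRingHom K
  have hmulK : ∀ X Y : Matrix (Fin n) (Fin n) ℤ, (X * Y).map r = X.map r * Y.map r :=
    fun X Y => Matrix.map_mul
  have hM0 : M.map r ≠ 0 := by
    intro h0
    have hdiv : ∀ i j, (p : ℤ) ∣ M i j := by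
      intro i j
      rw [← CharP.intCast_eq_zero_iff K p]
      exact congrFun (congrFun h0 i) j
    -- So `ℓ / p` already clears the denominators of `Q`, contradicting minimality of `ℓ`.
    obtain ⟨m, rfl⟩ := hdvd
    have hm : 0 < m := Nat.pos_of_mul_pos_left hℓ.1
    have hle := hℓ.2.2 m hm (by
      intro i j
      obtain ⟨c, hc⟩ := hdiv i j
      refine ⟨c, ?_⟩
      have h : (((p * m : ℕ) : ℚ) • Q) i j = ((M i j : ℤ) : ℚ) := hM i j
      have hp0 : (p : ℚ) ≠ 0 := by exact_mod_cast hp.ne_zero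
      rw [hc] at h
      simp only [Matrix.smul_apply, smul_eq_mul] at h ⊢
      push_cast at h
      apply mul_left_cancel₀ hp0
      rw [← h]; ring)
    have := hp.two_le
    nlinarith
  have hMM0 : (M.map r)ᵀ * M.map r = 0 := by
    rw [← Matrix.transpose_map, ← hmulK, hMM]
    have hl : r (ℓ : ℤ) = 0 :=
      (CharP.intCast_eq_zero_iff K p _).2 (by exact_mod_cast hdvd)
    ext i j
    rw [Matrix.map_apply, Matrix.smul_apply, smul_eq_mul, map_mul, map_pow, hl]
    simp
  have hAK : (A.map r).IsSymm := hA.map _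
  obtain ⟨μ, hμ⟩ := exists_multiple_root (A.map r) (M.map r) (B.map r)
    hAK hM0 hMM0 (by rw [← hmulK, ← hmulK, ← hAM])
  have hne : (A.map r).charpoly ≠ 0 := (Matrix.charpoly_monic _).ne_zero
  rw [one_lt_rootMultiplicity_iff_isRoot hne, Matrix.charpoly_map, derivative_map] at hμ
  obtain ⟨hroot, hroot'⟩ := hμ
  rw [IsRoot.def, eval_map] at hroot hroot'
  have hmonic := Matrix.charpoly_monic A
  have : Module.Free ℤ (AdjoinRoot A.charpoly) := hmonic.free_adjoinRoot
  have : Module.Finite ℤ (AdjoinRoot A.charpoly) := hmonic.finite_adjoinRoot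
  have hnorm := map_norm_eq_zero (AdjoinRoot.lift r μ hroot)
    (AdjoinRoot.mk A.charpoly (derivative A.charpoly)) (by rw [AdjoinRoot.lift_mk, hroot'])
  rw [CharP.intCast_eq_zero_iff K p] at hnorm
  exact hnorm.mul_left _
end

section
/- Let A be an n×n symmetric integer matrix with characteristic polynomial φ(x), and let Q be a rational orthogonal matrix of level ℓ with Q^T A Q a symmetric integer matrix. Let p be a prime factor of ℓ, suppose that over F_p one has φ(x) = (x − λ_0)²·φ̂(x) with λ_0 an integer and φ̂(x) square-free over F_p, and suppose additionally that rank_p(λ_0 I − A) = n − 1. Then p² divides det(λ_0 I − A). -/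
/-!
Write `M = lam - A` and let `R = ℓ Q`, an integer matrix with `Rᵀ R = ℓ²` and `A R = R B`, where
`B = Qᵀ A Q`. Modulo `p` the column space of `R` is nonzero (by minimality of `ℓ`), stable under `A`
and totally isotropic. An isotropic eigenvector of a symmetric matrix belongs to a multiple root of
the characteristic polynomial (`two_le_rootMultiplicity_of_isotropic`), and `lam` is the only possible
multiple root because `phihat` is square-free over a perfect field. So `M` is nilpotent on that column
space modulo `p` (`exists_pow_mul_eq_zero`), and it contains a nonzero kernel vector of `M`, which
lifts to `z = R v` with `v` integral. Then
`zᵀ M z = ℓ² vᵀ (lam - B) v` is divisible by `p²`.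

Since `M` has corank one modulo `p`, its adjugate is modulo `p` a multiple of `z zᵀ`. Writing
`M z = p w`, the identity `det M • z = p • adj M w` together with `p ∣ z ⬝ w` shows `p² ∣ det M`
(`sq_dvd_det_of_kernel_vector`).
-/

open Polynomial Matrix

/-! ### Isotropic invariant subspaces of symmetric matrices -/

/-- An isotropic eigenvector of a symmetric matrix forces its eigenvalue to be a multiple root of the
characteristic polynomial. If `charpoly = (X - μ) c` with `c(μ) ≠ 0`, then for any `y` not orthogonal
to `u` the vector `c(A) y` is an eigenvector not orthogonal to `u`, hence independent of `u`. -/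
lemma two_le_rootMultiplicity_of_isotropic {K : Type*} [Field K] {n : ℕ}
    (A : Matrix (Fin n) (Fin n) K) (hA : A.IsSymm) (μ : K) (u : Fin n → K) (hu : u ≠ 0)
    (hAu : A *ᵥ u = μ • u) (huu : u ⬝ᵥ u = 0) :
    2 ≤ A.charpoly.rootMultiplicity μ := by
  by_contra hlt
  have hne : A.charpoly ≠ 0 := A.charpoly_monic.ne_zero
  have heq : Module.finrank K (Module.End.maxGenEigenspace (Matrix.toLin' A) μ) =
      A.charpoly.rootMultiplicity μ := by
    rw [LinearMap.finrank_maxGenEigenspace_eq, Matrix.charpoly_toLin']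
  have hle : Module.finrank K (Module.End.eigenspace (Matrix.toLin' A) μ) ≤ 1 := by
    have h1 : Module.End.eigenspace (Matrix.toLin' A) μ ≤ Module.End.maxGenEigenspace (Matrix.toLin' A) μ :=
      Module.End.genEigenspace_le_maximal _ _ 1
    have := Submodule.finrank_mono h1
    omega
  have hmem : u ∈ Module.End.eigenspace (Matrix.toLin' A) μ := by
    rw [Module.End.mem_eigenspace_iff, Matrix.toLin'_apply, hAu]
  have hpos : 0 < A.charpoly.rootMultiplicity μ := by
    rw [Polynomial.rootMultiplicity_pos hne, ← Matrix.charpoly_toLin',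
      ← Module.End.hasEigenvalue_iff_isRoot_charpoly]
    exact Module.End.hasEigenvalue_of_hasEigenvector ⟨hmem, hu⟩
  obtain ⟨c, hc, hcμ⟩ := Polynomial.exists_eq_pow_rootMultiplicity_mul_and_not_dvd A.charpoly hne μ
  have hm1 : A.charpoly.rootMultiplicity μ = 1 := by omega
  rw [hm1, pow_one] at hc
  rw [Polynomial.dvd_iff_isRoot, Polynomial.IsRoot.def] at hcμ
  obtain ⟨i, hi⟩ : ∃ i, u i ≠ 0 := by
    by_contra! h
    exact hu (funext h)
  set y : Fin n → K := aeval A c *ᵥ Pi.single i 1 with hy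
  have hyE : y ∈ Module.End.eigenspace (Matrix.toLin' A) μ := by
    have h0 : aeval A A.charpoly = 0 := Matrix.aeval_self_charpoly A
    rw [hc, map_mul, map_sub, aeval_X, aeval_C, Algebra.algebraMap_eq_smul_one] at h0
    have h2 : (A - μ • 1) *ᵥ y = 0 := by
      rw [hy, Matrix.mulVec_mulVec, h0, Matrix.zero_mulVec]
    rw [Module.End.mem_eigenspace_iff, Matrix.toLin'_apply]
    rw [Matrix.sub_mulVec, Matrix.smul_mulVec, Matrix.one_mulVec] at h2
    exact sub_eq_zero.1 h2
  have huc : u ᵥ* aeval A c = c.eval μ • u := by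
    have huA : u ᵥ* A = μ • u := by rw [← hAu, ← Matrix.vecMul_transpose, hA.eq]
    clear * - huA
    induction c using Polynomial.induction_on' with
    | add p q hp hq => simp [Matrix.vecMul_add, hp, hq, add_smul]
    | monomial k a =>
      have : ∀ k : ℕ, u ᵥ* A ^ k = μ ^ k • u := by
        intro k
        induction k with
        | zero => simp
        | succ k ih =>
          rw [pow_succ, ← Matrix.vecMul_vecMul, ih, Matrix.smul_vecMul, huA, smul_smul, pow_succ]
      simp [Polynomial.aeval_monomial, Algebra.algebraMap_eq_smul_one, Matrix.vecMul_smul, this, smul_smul]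
  have huy : u ⬝ᵥ y ≠ 0 := by
    rw [hy, Matrix.dotProduct_mulVec, huc]
    simp [hcμ, hi]
  obtain ⟨v, hv⟩ := finrank_le_one_iff.1 hle
  obtain ⟨a, ha⟩ := hv ⟨u, hmem⟩
  obtain ⟨b, hb⟩ := hv ⟨y, hyE⟩
  have ha' : a • (v : Fin n → K) = u := congrArg Subtype.val ha
  have hb' : b • (v : Fin n → K) = y := congrArg Subtype.val hb
  have ha0 : a ≠ 0 := by
    rintro rfl
    exact hu (by rw [← ha', zero_smul])
  apply huy
  have : y = (b * a⁻¹) • u := by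
    rw [← ha', ← hb', smul_smul]; congr 1; field_simp
  rw [this, dotProduct_smul, huu, smul_zero]

/-- The column space of `R` is an `A`-invariant totally isotropic subspace, so over the algebraic
closure every eigenvalue of `A` on it is a multiple root of the characteristic polynomial. Only `lam`
can be one, hence `lam - A` is nilpotent on this column space. -/
lemma exists_pow_mul_eq_zero {F : Type*} [Field F] [PerfectField F] {n : ℕ}
    (A B R : Matrix (Fin n) (Fin n) F) (hA : A.IsSymm) (hAR : A * R = R * B) (hR : Rᵀ * R = 0)
    (lam : F) (h : F[X]) (hsf : Squarefree h)
    (hfac : A.charpoly = (X - C lam) ^ 2 * h) :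
    ∃ k : ℕ, (lam • (1 : Matrix (Fin n) (Fin n) F) - A) ^ k * R = 0 := by
  have hne : A.charpoly ≠ 0 := A.charpoly_monic.ne_zero
  have hh0 : h ≠ 0 := hsf.ne_zero
  obtain ⟨c, hc, hclam⟩ := Polynomial.exists_eq_pow_rootMultiplicity_mul_and_not_dvd h hh0 lam
  set e := h.rootMultiplicity lam
  have hfac' : A.charpoly = (X - C lam) ^ (2 + e) * c := by
    rw [hfac, pow_add, mul_assoc, ← hc]
  have hcsep : c.Separable :=
    PerfectField.separable_iff_squarefree.2 (hsf.squarefree_of_dvd (hc ▸ dvd_mul_left _ _))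
  set M := lam • (1 : Matrix (Fin n) (Fin n) F) - A with hM
  refine ⟨2 + e, ?_⟩
  by_contra hS
  set S := M ^ (2 + e) * R with hSdef
  have hMR : M * R = R * (lam • (1 : Matrix (Fin n) (Fin n) F) - B) := by
    rw [hM, sub_mul, mul_sub, hAR]; simp
  have hAM : A * M = M * A := by rw [hM, mul_sub, sub_mul]; simp
  have hAS : A * S = S * B := by
    rw [hSdef, ← mul_assoc, (show Commute A M from hAM).pow_right (2 + e) |>.eq, mul_assoc, hAR,
      mul_assoc]
  have hSR : S = R * (lam • (1 : Matrix (Fin n) (Fin n) F) - B) ^ (2 + e) := by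
    exact ((show SemiconjBy R _ M from hMR.symm).pow_right (2 + e)).eq.symm
  have hSS : Sᵀ * S = 0 := by
    rw [hSR, Matrix.transpose_mul, mul_assoc, ← mul_assoc Rᵀ, hR, zero_mul, mul_zero]
  have hcS : aeval A c * S = 0 := by
    have h0 : aeval A A.charpoly = 0 := Matrix.aeval_self_charpoly A
    have h1 : aeval A (X - C lam) = - M := by
      rw [map_sub, aeval_X, aeval_C, Algebra.algebraMap_eq_smul_one, hM, neg_sub]
    rw [hfac', mul_comm, map_mul, map_pow, h1, neg_pow] at h0
    have h2 : aeval A c * M ^ (2 + e) = 0 := by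
      rcases neg_one_pow_eq_or (Matrix (Fin n) (Fin n) F) (2 + e) with h3 | h3 <;>
        simpa [h3] using h0
    rw [hSdef, ← mul_assoc, h2, zero_mul]
  -- Pass to the algebraic closure to find an eigenvector in the column space of `S`.
  let K := AlgebraicClosure F
  let f : F →+* K := algebraMap F K
  set A' := A.map f with hA'
  set S' := S.map f with hS'
  set B' := B.map f with hB'
  have hAS' : A' * S' = S' * B' := by
    rw [hA', hS', hB', ← Matrix.map_mul, ← Matrix.map_mul, hAS]
  have hSS' : S'ᵀ * S' = 0 := by
    rw [hS', ← Matrix.transpose_map, ← Matrix.map_mul, hSS, Matrix.map_zero _ (map_zero f)]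
  have hS0 : S' ≠ 0 := by
    intro h0
    apply hS
    ext i j
    have := congrFun (congrFun h0 i) j
    simpa [hS'] using this
  have hA's : A'.IsSymm := by
    rw [Matrix.IsSymm, hA', ← Matrix.transpose_map, hA.eq]
  have hcS' : aeval A' (c.map f) * S' = 0 := by
    have h1 : aeval A' (c.map f) = (aeval A c).map f := by
      refine (Polynomial.map_aeval_eq_aeval_map (T := K) (φ := f)
        (ψ := (f.mapMatrix : Matrix (Fin n) (Fin n) F →+* Matrix (Fin n) (Fin n) K)) ?_ c A).symm
      ext x i j
      by_cases hij : i = j <;> simp [hij, f, Matrix.algebraMap_matrix_apply]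
    rw [h1, hS', ← Matrix.map_mul, hcS, Matrix.map_zero _ (map_zero f)]
  have hWinv : ∀ x ∈ LinearMap.range (Matrix.toLin' S'),
      Matrix.toLin' A' x ∈ LinearMap.range (Matrix.toLin' S') := by
    rintro _ ⟨v, rfl⟩
    refine ⟨B' *ᵥ v, ?_⟩
    rw [Matrix.toLin'_apply, Matrix.toLin'_apply, Matrix.toLin'_apply, Matrix.mulVec_mulVec,
      Matrix.mulVec_mulVec, hAS']
  have : Nontrivial (LinearMap.range (Matrix.toLin' S')) := by
    rw [Submodule.nontrivial_iff_ne_bot, Ne, LinearMap.range_eq_bot]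
    simpa using hS0
  obtain ⟨μ, hμ⟩ := Module.End.exists_eigenvalue ((Matrix.toLin' A').restrict hWinv)
  obtain ⟨⟨u, v, hv⟩, hu⟩ := hμ.exists_hasEigenvector
  have hAu : A' *ᵥ u = μ • u := by
    have := congrArg Subtype.val hu.apply_eq_smul
    simpa using this
  have hu0 : u ≠ 0 := by
    intro h0
    exact hu.2 (Subtype.ext h0)
  rw [Matrix.toLin'_apply] at hv
  have huu : u ⬝ᵥ u = 0 := by
    rw [← hv, Matrix.dotProduct_mulVec, Matrix.vecMul_mulVec, hSS']
    simp
  have h2 := two_le_rootMultiplicity_of_isotropic A' hA's μ u hu0 hAu huu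
  have hcμ : (c.map f).eval μ = 0 := by
    have h3 : aeval (Matrix.toLin' A') (c.map f) u = (c.map f).eval μ • u :=
      Module.End.aeval_apply_of_hasEigenvector (f := Matrix.toLin' A') (p := c.map f)
        ⟨Module.End.mem_eigenspace_iff.2 (by simpa using hAu), hu0⟩
    have h4 : aeval (Matrix.toLin' A') (c.map f) = Matrix.toLin' (aeval A' (c.map f)) :=
      Polynomial.aeval_algHom_apply (Matrix.toLinAlgEquiv' : _ ≃ₐ[K] _) A' (c.map f)
    rw [h4, Matrix.toLin'_apply, ← hv, Matrix.mulVec_mulVec, hcS', Matrix.zero_mulVec, hv] at h3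
    exact (smul_eq_zero.1 h3.symm).resolve_right hu0
  have hchar : A'.charpoly = (X - C (f lam)) ^ (2 + e) * c.map f := by
    rw [hA', Matrix.charpoly_map, hfac']
    simp
  have hclam' : (c.map f).eval (f lam) ≠ 0 := by
    rw [Polynomial.eval_map_apply]
    rw [Polynomial.dvd_iff_isRoot, Polynomial.IsRoot.def] at hclam
    simpa using hclam
  have hμlam : μ ≠ f lam := by
    rintro rfl
    exact hclam' hcμ
  have hne' : A'.charpoly ≠ 0 := A'.charpoly_monic.ne_zero
  rw [hchar, Polynomial.rootMultiplicity_mul (hchar ▸ hne'),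
    Polynomial.rootMultiplicity_eq_zero (p := (X - C (f lam)) ^ (2 + e))
      (by simp [Polynomial.IsRoot, sub_eq_zero, hμlam]), zero_add] at h2
  have := Polynomial.rootMultiplicity_le_one_of_separable (hcsep.map (f := f)) μ
  omega

/-! ### Determinants of symmetric matrices of corank one modulo `p` -/

/-- If `z` spans the kernel of the symmetric matrix `M` modulo `p` and `M z = p w`, then each row of
`adj M` is a multiple of `z` modulo `p`, and `det M • z = p • adj M w` with `p ∣ z ⬝ w`. -/
lemma sq_dvd_det_of_kernel_vector {n p : ℕ} [Fact p.Prime] (M : Matrix (Fin n) (Fin n) ℤ)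
    (hM : M.IsSymm) (hrank : (M.map (Int.cast : ℤ → ZMod p)).rank = n - 1)
    (z : Fin n → ℤ) (j : Fin n) (hz : ¬ (p : ℤ) ∣ z j)
    (hMz : ∀ i, (p : ℤ) ∣ (M *ᵥ z) i) (hzMz : (p : ℤ) ^ 2 ∣ z ⬝ᵥ (M *ᵥ z)) :
    (p : ℤ) ^ 2 ∣ M.det := by
  have hp : p.Prime := Fact.out
  have hp0 : (p : ℤ) ≠ 0 := by exact_mod_cast hp.ne_zero
  choose w hw using hMz
  have hw' : M *ᵥ z = (p : ℤ) • w := funext hw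
  have hzw : (p : ℤ) ∣ z ⬝ᵥ w := by
    rw [hw', dotProduct_smul, smul_eq_mul, pow_two] at hzMz
    exact (mul_dvd_mul_iff_left hp0).1 hzMz
  let f := Int.castRingHom (ZMod p)
  set N := M.map f with hN
  set zb : Fin n → ZMod p := f ∘ z with hzb
  have hNz : N *ᵥ zb = 0 := by
    ext i
    have := RingHom.map_mulVec f M z i
    rw [hN, hzb, ← this, hw']
    simp
  have hzj : zb j ≠ 0 := fun h => hz ((ZMod.intCast_zmod_eq_zero_iff_dvd (z j) p).1 h)
  have hzb0 : zb ≠ 0 := fun h => hzj (congrFun h j)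
  have hdet : N.det = 0 := Matrix.exists_mulVec_eq_zero_iff.1 ⟨zb, hzb0, hNz⟩
  have hker : Module.finrank (ZMod p) (LinearMap.ker N.mulVecLin) = 1 := by
    have h1 := LinearMap.finrank_range_add_finrank_ker N.mulVecLin
    have h2 : Module.finrank (ZMod p) (LinearMap.range N.mulVecLin) = n - 1 := hrank
    rw [h2, Module.finrank_fin_fun] at h1
    have := j.pos
    omega
  have hspan := (finrank_eq_one_iff_of_nonzero' (⟨zb, hNz⟩ : LinearMap.ker N.mulVecLin)
    (fun h => hzb0 (congrArg Subtype.val h))).1 hker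
  have hadjs : M.adjugateᵀ = M.adjugate := by
    rw [Matrix.adjugate_transpose, hM.eq]
  have hadj : ∀ i, (p : ℤ) ∣ (M.adjugate *ᵥ w) i := by
    intro i
    have hmem : N *ᵥ (N.adjugate.col i) = 0 := by
      ext k
      have := congrFun (congrFun (Matrix.mul_adjugate N) k) i
      rw [hdet, zero_smul] at this
      exact this
    obtain ⟨a, ha⟩ := hspan ⟨_, hmem⟩
    have ha' : a • zb = N.adjugate.col i := congrArg Subtype.val ha
    rw [← ZMod.intCast_zmod_eq_zero_iff_dvd]
    have hrow : f ((M.adjugate *ᵥ w) i) = (N.adjugate.col i) ⬝ᵥ (f ∘ w) := by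
      have hNadj : N.adjugate = M.adjugate.map f := (RingHom.map_adjugate f M).symm
      rw [hNadj, RingHom.map_mulVec]
      nth_rewrite 1 [← hadjs]
      rfl
    change f ((M.adjugate *ᵥ w) i) = 0
    rw [hrow, ← ha', smul_dotProduct, hzb, ← RingHom.map_dotProduct]
    rw [show f (z ⬝ᵥ w) = 0 from (ZMod.intCast_zmod_eq_zero_iff_dvd _ p).2 hzw, smul_zero]
  have hfin : M.det * z j = p * (M.adjugate *ᵥ w) j := by
    have h1 : M.adjugate *ᵥ (M *ᵥ z) = M.det • z := by
      rw [Matrix.mulVec_mulVec, Matrix.adjugate_mul, Matrix.smul_mulVec, Matrix.one_mulVec]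
    rw [hw', Matrix.mulVec_smul] at h1
    exact (congrFun h1 j).symm
  have hd : (p : ℤ) ^ 2 ∣ M.det * z j := by
    rw [hfin, pow_two]
    exact mul_dvd_mul_left _ (hadj j)
  have hcop : IsCoprime ((p : ℤ) ^ 2) (z j) :=
    ((Nat.prime_iff_prime_int.1 hp).coprime_iff_not_dvd.2 hz).pow_left
  exact hcop.dvd_of_dvd_mul_right hd

/-! ### The level of a rational orthogonal matrix and the determinant -/

/-- **Lemma 4.1.** Under the conditions of Lemma 3.4, if moreover
`rank_p(λ₀I - A) = n - 1`, then `p² ∣ det(λ₀I - A)`. -/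
theorem corank_one_imp_p_sq_dvd_det {n : ℕ} (A : Matrix (Fin n) (Fin n) ℤ)
    (hA : A.IsSymm) (Q : Matrix (Fin n) (Fin n) ℚ) (hQ : Qᵀ * Q = 1)
    (ℓ : ℕ) (hℓ : IsLevel Q ℓ)
    (hint : IsIntegerMatrix (Qᵀ * A.map (Int.cast : ℤ → ℚ) * Q))
    (p : ℕ) (hp : p.Prime) (hdvd : p ∣ ℓ)
    (lam : ℤ) (phihat : Polynomial (ZMod p)) (hsf : Squarefree phihat)
    (hfac : (A.charpoly).map (Int.castRingHom (ZMod p)) =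
      (Polynomial.X - Polynomial.C ((lam : ZMod p))) ^ 2 * phihat)
    (hrank : ((lam • (1 : Matrix (Fin n) (Fin n) ℤ) - A).map
      (Int.cast : ℤ → ZMod p)).rank = n - 1) :
    (p : ℤ) ^ 2 ∣ (lam • (1 : Matrix (Fin n) (Fin n) ℤ) - A).det := by
  have : Fact p.Prime := ⟨hp⟩
  obtain ⟨hℓ0, hRint, hmin⟩ := hℓ
  choose B hB using hint
  choose R hR using hRint
  let ι := Int.castRingHom ℚ
  have hB' : (Matrix.of B).map ι = Qᵀ * A.map ι * Q := by
    ext i j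
    exact (hB i j).symm
  have hR' : (Matrix.of R).map ι = (ℓ : ℚ) • Q := by
    ext i j
    exact (hR i j).symm
  generalize Matrix.of B = B at hB'
  generalize Matrix.of R = R' at hR'
  have hQ' : Q * Qᵀ = 1 := mul_eq_one_comm.1 hQ
  have hinj : Function.Injective (fun X : Matrix (Fin n) (Fin n) ℤ => X.map ι) :=
    Matrix.map_injective Int.cast_injective
  have hAR : A * R' = R' * B := by
    apply hinj
    simp only [Matrix.map_mul]
    rw [hB', hR', ← mul_assoc, ← mul_assoc, smul_mul_assoc, hQ', mul_smul_comm, smul_mul_assoc,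
      smul_mul_assoc, one_mul]
  have hRR : R'ᵀ * R' = ((ℓ : ℤ) ^ 2) • (1 : Matrix (Fin n) (Fin n) ℤ) := by
    apply hinj
    simp only [Matrix.map_mul, Matrix.transpose_map]
    rw [hR', Matrix.transpose_smul, smul_mul_assoc, mul_smul_comm, hQ, smul_smul]
    ext i j
    simp only [Matrix.map_apply, Matrix.smul_apply, Matrix.one_apply]
    by_cases h : i = j <;> simp [h, ι, pow_two]
  have hpl : (p : ℤ) ∣ ℓ := by exact_mod_cast hdvd
  let f := Int.castRingHom (ZMod p)
  have hf : ∀ x : ℤ, f x = 0 ↔ (p : ℤ) ∣ x := fun x => ZMod.intCast_zmod_eq_zero_iff_dvd x p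
  -- By minimality of the level, `ℓ Q` does not vanish modulo `p`.
  have hR0 : R'.map f ≠ 0 := by
    intro h0
    obtain ⟨m, rfl⟩ := hdvd
    have hm : 0 < m := Nat.pos_of_mul_pos_left hℓ0
    have hp0 : (p : ℚ) ≠ 0 := by exact_mod_cast hp.ne_zero
    have := hmin m hm (by
      intro i j
      obtain ⟨t, ht⟩ := (hf (R' i j)).1 (congrFun (congrFun h0 i) j)
      refine ⟨t, ?_⟩
      have h1 := congrFun (congrFun hR' i) j
      simp only [Matrix.map_apply, Matrix.smul_apply, ht, ι, smul_eq_mul] at h1 ⊢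
      push_cast at h1
      apply mul_left_cancel₀ hp0
      rw [← mul_assoc, ← h1]
      simp)
    have := hp.two_le
    nlinarith
  set M := lam • (1 : Matrix (Fin n) (Fin n) ℤ) - A with hM
  have hMmap : M.map f = (lam : ZMod p) • (1 : Matrix (Fin n) (Fin n) (ZMod p)) - A.map f := by
    ext i j
    simp only [hM, Matrix.map_apply, Matrix.sub_apply, Matrix.smul_apply, Matrix.one_apply]
    by_cases h : i = j <;> simp [h, f]
  have hex : ∃ k : ℕ, (M ^ k * R').map f = 0 := by
    obtain ⟨k, hk⟩ := exists_pow_mul_eq_zero (A.map f) (B.map f) (R'.map f)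
      (by rw [Matrix.IsSymm, ← Matrix.transpose_map, hA.eq])
      (by rw [← Matrix.map_mul, ← Matrix.map_mul, hAR])
      (by
        rw [← Matrix.transpose_map, ← Matrix.map_mul, hRR]
        ext i j
        have : f ((ℓ : ℤ)) = 0 := (hf _).2 hpl
        simp only [Matrix.map_apply, Matrix.smul_apply, Matrix.one_apply, smul_eq_mul, map_mul, map_pow,
          this]
        simp)
      (lam : ZMod p) phihat hsf (by rw [Matrix.charpoly_map, hfac])
    refine ⟨k, ?_⟩
    rw [Matrix.map_mul, Matrix.map_pow, hMmap, hk]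
  -- For the least such exponent, some column of `M ^ (k - 1) * R'` is a kernel vector modulo `p`.
  classical
  obtain ⟨k, hk⟩ : ∃ k, Nat.find hex = k + 1 := by
    refine Nat.exists_eq_succ_of_ne_zero fun h0 => hR0 ?_
    have := Nat.find_spec hex
    rwa [h0, pow_zero, one_mul] at this
  have hk1 : (M ^ (k + 1) * R').map f = 0 := hk ▸ Nat.find_spec hex
  have hk0 : (M ^ k * R').map f ≠ 0 := Nat.find_min hex (by omega)
  obtain ⟨j, i, hji⟩ : ∃ j i, ¬ (p : ℤ) ∣ (M ^ k * R') j i := by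
    by_contra! h
    apply hk0
    ext j i
    simp only [Matrix.map_apply, Matrix.zero_apply, hf]
    exact h j i
  set D := lam • (1 : Matrix (Fin n) (Fin n) ℤ) - B with hD
  have hMR : M * R' = R' * D := by
    rw [hM, hD, sub_mul, mul_sub, hAR, smul_mul_assoc, mul_smul_comm, one_mul, mul_one]
  have hMkR : M ^ k * R' = R' * D ^ k :=
    ((show SemiconjBy R' D M from hMR.symm).pow_right k).eq.symm
  have hMs : M.IsSymm := by
    rw [Matrix.IsSymm, hM, Matrix.transpose_sub, Matrix.transpose_smul, Matrix.transpose_one, hA.eq]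
  refine sq_dvd_det_of_kernel_vector M hMs hrank (fun a => (M ^ k * R') a i) j hji ?_ ?_
  · intro a
    rw [← hf]
    have := congrFun (congrFun hk1 a) i
    rw [pow_succ', mul_assoc] at this
    exact this
  · have h1 : (M ^ k * R')ᵀ * (M * (M ^ k * R')) = ((ℓ : ℤ) ^ 2) • ((D ^ k)ᵀ * (D * D ^ k)) := by
      rw [hMkR, ← mul_assoc M, hMR, Matrix.transpose_mul, mul_assoc, mul_assoc R', ← mul_assoc R'ᵀ,
        hRR, smul_mul_assoc, one_mul, mul_smul_comm]
    have h2 := congrFun (congrFun h1 i) i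
    change ((M ^ k * R')ᵀ * (M * (M ^ k * R'))) i i = _ at h2
    change (p : ℤ) ^ 2 ∣ ((M ^ k * R')ᵀ * (M * (M ^ k * R'))) i i
    rw [h2, Matrix.smul_apply, smul_eq_mul]
    exact Dvd.dvd.mul_right (pow_dvd_pow_of_dvd hpl 2) _
end

section
/- Let A be an n×n symmetric integer matrix with characteristic polynomial φ(x) and discriminant Δ_A, and let p be a prime factor of Δ_A such that p² does not divide Δ_A. Then there exist an integer λ_0 and a polynomial φ̂ over F_p, square-free over F_p, such that φ(x) = (x − λ_0)²·φ̂(x) over F_p and p does not divide φ̂(λ_0). -/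
/-!
Let `φ` be the characteristic polynomial of `A`, a monic integer polynomial. Up to sign, `Δ_A` is
the norm of the class of `φ'` in the free `ℤ`-algebra `ℤ[x]/(φ)`, so, when it is nonzero, `|Δ_A|` is
the order of the finite ring `Q = ℤ[x]/(φ, φ')`. This has two consequences.

* If a polynomial `d` of degree `k` over `𝔽_p` divides both `φ` and `φ'` modulo `p`, then `Q`
  surjects onto `𝔽_p[x]/(d)`, which has `p ^ k` elements, so `p ^ k ∣ Δ_A`.
* If `φ` and `φ'` are coprime modulo `p`, then `p` is a unit in `Q`, so by Cauchy's theorem `p` does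
  not divide `|Q|`.

Hence, if `p` divides `Δ_A` exactly once, `φ` and `φ'` have a common factor modulo `p`, and all their
common factors have degree at most one. A common factor `x - λ₀` divides `φ` twice, say
`φ = (x - λ₀)² φ̂`. If `φ̂(λ₀) = 0`, then `(x - λ₀)²` divides `φ` and `φ'`; if `q² ∣ φ̂` with `q`
nonconstant, then `(x - λ₀) q` does. Either contradicts the degree bound.
-/

open Polynomial Matrix

theorem natAbs_norm_eq_card_quotient {R : Type*} [CommRing R] [Module.Free ℤ R]
    [Module.Finite ℤ R] (r : R) (hr : Algebra.norm ℤ r ≠ 0) :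
    (Algebra.norm ℤ r).natAbs = Nat.card (R ⧸ Ideal.span {r}) := by
  have hinj : Function.Injective (LinearMap.mulLeft ℤ r) := by
    rw [← LinearMap.ker_eq_bot]
    by_contra hk
    exact hr (by
      rw [Algebra.norm_apply]
      exact LinearMap.det_eq_zero_iff_ker_ne_bot.mpr hk)
  have hrange : LinearMap.range (LinearMap.mulLeft ℤ r) =
      (Ideal.span {r}).restrictScalars ℤ := by
    ext x
    simp [Ideal.mem_span_singleton', mul_comm]
  exact Submodule.natAbs_det_equiv ((Ideal.span {r}).restrictScalars ℤ)
    ((LinearEquiv.ofInjective _ hinj).trans (LinearEquiv.ofEq _ _ hrange))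

/-- The ring `ℤ[x]/(f, g)` surjects onto `𝔽_p[x]/(d)`, so when the norm of `g` is nonzero the order
of the latter divides the order of the former. -/
theorem pow_natDegree_dvd_norm {f g : ℤ[X]} (hf : f.Monic) {p : ℕ} [Fact p.Prime]
    {d : (ZMod p)[X]} (hd : d ≠ 0) (hdf : d ∣ f.map (Int.castRingHom (ZMod p)))
    (hdg : d ∣ g.map (Int.castRingHom (ZMod p))) :
    (p : ℤ) ^ d.natDegree ∣ Algebra.norm ℤ (AdjoinRoot.mk f g) := by
  have := hf.free_adjoinRoot
  have := hf.finite_adjoinRoot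
  by_cases h0 : Algebra.norm ℤ (AdjoinRoot.mk f g) = 0
  · simp [h0]
  have hev (q : ℤ[X]) : q.eval₂ ((AdjoinRoot.of d).comp (Int.castRingHom (ZMod p)))
      (AdjoinRoot.root d) = AdjoinRoot.mk d (q.map (Int.castRingHom (ZMod p))) := by
    rw [← Polynomial.eval₂_map, ← AdjoinRoot.aeval_eq, Polynomial.aeval_def,
      AdjoinRoot.algebraMap_eq]
  let F : AdjoinRoot f →+* AdjoinRoot d :=
    AdjoinRoot.lift ((AdjoinRoot.of d).comp (Int.castRingHom (ZMod p))) (AdjoinRoot.root d)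
      (by rw [hev, AdjoinRoot.mk_eq_zero]; exact hdf)
  have hF (q : ℤ[X]) :
      F (AdjoinRoot.mk f q) = AdjoinRoot.mk d (q.map (Int.castRingHom (ZMod p))) := by
    rw [← hev]; exact AdjoinRoot.lift_mk _ _
  let G : (AdjoinRoot f ⧸ Ideal.span {AdjoinRoot.mk f g}) →+* AdjoinRoot d :=
    Ideal.Quotient.lift _ F (by
      intro a ha
      obtain ⟨b, rfl⟩ := Ideal.mem_span_singleton'.mp ha
      rw [map_mul, hF, AdjoinRoot.mk_eq_zero.mpr hdg, mul_zero])
  have hG : Function.Surjective G := by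
    intro y
    obtain ⟨y, rfl⟩ := AdjoinRoot.mk_surjective y
    obtain ⟨q, rfl⟩ := Polynomial.map_surjective _ (ZMod.ringHom_surjective
      (Int.castRingHom (ZMod p))) y
    exact ⟨Ideal.Quotient.mk _ (AdjoinRoot.mk f q), hF q⟩
  have hcard : Nat.card (AdjoinRoot d) = p ^ d.natDegree := by
    have : Module.Finite (ZMod p) (AdjoinRoot d) := (AdjoinRoot.powerBasis hd).finite
    rw [Module.natCard_eq_pow_finrank (K := ZMod p), Nat.card_zmod,
      (AdjoinRoot.powerBasis hd).finrank, AdjoinRoot.powerBasis_dim]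
  have h := AddSubgroup.card_dvd_of_surjective G.toAddMonoidHom hG
  rw [hcard, ← natAbs_norm_eq_card_quotient _ h0] at h
  rw [← Int.natCast_dvd] at h
  exact_mod_cast h

/-- A Bézout relation modulo `p` makes `p` a unit in `ℤ[x]/(f, g)`, which then has no element of
order `p`. -/
theorem not_isCoprime_of_dvd_norm {f g : ℤ[X]} (hf : f.Monic) {p : ℕ} [hp : Fact p.Prime]
    (h0 : Algebra.norm ℤ (AdjoinRoot.mk f g) ≠ 0)
    (hdvd : (p : ℤ) ∣ Algebra.norm ℤ (AdjoinRoot.mk f g)) :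
    ¬ IsCoprime (f.map (Int.castRingHom (ZMod p))) (g.map (Int.castRingHom (ZMod p))) := by
  have := hf.free_adjoinRoot
  have := hf.finite_adjoinRoot
  rintro ⟨a, b, hab⟩
  have hs := Polynomial.map_surjective _ (ZMod.ringHom_surjective (Int.castRingHom (ZMod p)))
  obtain ⟨a, rfl⟩ := hs a
  obtain ⟨b, rfl⟩ := hs b
  have hc : C (p : ℤ) ∣ a * f + b * g - 1 := by
    rw [Polynomial.C_dvd_iff_dvd_coeff]
    intro i
    rw [← ZMod.intCast_zmod_eq_zero_iff_dvd, ← eq_intCast (Int.castRingHom (ZMod p)),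
      ← Polynomial.coeff_map]
    simp [hab]
  obtain ⟨c, hc⟩ := hc
  have hcard : (Algebra.norm ℤ (AdjoinRoot.mk f g)).natAbs =
      Nat.card (AdjoinRoot f ⧸ Ideal.span {AdjoinRoot.mk f g}) :=
    natAbs_norm_eq_card_quotient _ h0
  rw [Int.natCast_dvd, hcard] at hdvd
  have hfin : Finite (AdjoinRoot f ⧸ Ideal.span {AdjoinRoot.mk f g}) := by
    apply Nat.finite_of_card_ne_zero
    rw [← hcard]
    exact Int.natAbs_ne_zero.mpr h0
  obtain ⟨x, hx⟩ := exists_prime_addOrderOf_dvd_card' p hdvd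
  have hpx : (p : AdjoinRoot f ⧸ Ideal.span {AdjoinRoot.mk f g}) * x = 0 := by
    rw [← nsmul_eq_mul, ← hx, addOrderOf_nsmul_eq_zero]
  let ψ := (Ideal.Quotient.mk (Ideal.span {AdjoinRoot.mk f g})).comp (AdjoinRoot.mk f)
  have hψf : ψ f = 0 := by simp [ψ]
  have hψg : ψ g = 0 := Ideal.Quotient.eq_zero_iff_mem.mpr (Ideal.mem_span_singleton_self _)
  have h1 := congrArg ψ hc
  simp only [map_sub, map_add, map_mul, hψf, hψg, map_one, mul_zero, add_zero, zero_sub,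
    map_natCast] at h1
  have hx0 : x = 0 := by linear_combination (-x) * h1 - ψ c * hpx
  rw [hx0, addOrderOf_zero] at hx
  exact hp.out.one_lt.ne hx

/-- If `f` and `f'` have a nonconstant common factor, but none of degree at least two, then `f` is
the product of the square of a linear factor and a square-free polynomial prime to it. -/
theorem exists_sq_mul_squarefree {K : Type*} [Field K] {f : K[X]} (hf : f ≠ 0)
    (hcop : ¬ IsCoprime f (derivative f))
    (hdeg : ∀ d : K[X], d ∣ f → d ∣ derivative f → d.natDegree < 2) :
    ∃ (a : K) (h : K[X]), Squarefree h ∧ f = (X - C a) ^ 2 * h ∧ h.eval a ≠ 0 := by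
  classical
  have hgcd : ¬ IsUnit (EuclideanDomain.gcd f (derivative f)) := by
    rwa [EuclideanDomain.gcd_isUnit_iff]
  obtain ⟨π, hm, hirr, hπ⟩ := Polynomial.exists_monic_irreducible_factor _ hgcd
  have hπf : π ∣ f := hπ.trans (EuclideanDomain.gcd_dvd_left _ _)
  have hπf' : π ∣ derivative f := hπ.trans (EuclideanDomain.gcd_dvd_right _ _)
  have hπ1 : π.natDegree = 1 := by
    have h1 := hdeg π hπf hπf'
    have h2 := hirr.natDegree_pos
    omega
  obtain ⟨a, rfl⟩ : ∃ a, π = X - C a :=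
    ⟨-π.coeff 0, by rw [C_neg, sub_neg_eq_add]; exact hm.eq_X_add_C hπ1⟩
  obtain ⟨k, rfl⟩ := hπf
  have hk : X - C a ∣ k := by
    rw [derivative_mul, derivative_X_sub_C, one_mul] at hπf'
    exact (dvd_add_left (dvd_mul_right _ _)).mp hπf'
  obtain ⟨h, rfl⟩ := hk
  refine ⟨a, h, ?_, by ring, ?_⟩
  · rintro q ⟨s, rfl⟩
    by_contra hq
    have hq0 : q ≠ 0 := by rintro rfl; simp at hf
    have hqd : q.natDegree ≠ 0 := fun h0 => hq (Polynomial.isUnit_iff_degree_eq_zero.mpr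
      (by rw [degree_eq_natDegree hq0, h0]; rfl))
    have hlt := hdeg ((X - C a) * q) ⟨(X - C a) * q * s, by ring⟩
      ⟨2 * derivative ((X - C a) * q) * s + (X - C a) * q * derivative s, by
        rw [show (X - C a) * ((X - C a) * (q * q * s)) = ((X - C a) * q) ^ 2 * s by ring,
          derivative_mul, derivative_sq, C_ofNat]
        ring⟩
    rw [natDegree_mul (X_sub_C_ne_zero a) hq0, natDegree_X_sub_C] at hlt
    omega
  · intro h0
    obtain ⟨s, rfl⟩ := dvd_iff_isRoot.mpr h0
    have hlt := hdeg ((X - C a) ^ 2) ⟨(X - C a) * s, by ring⟩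
      ⟨3 * s + (X - C a) * derivative s, by
        simp only [derivative_mul, derivative_X_sub_C]
        ring⟩
    simp at hlt

/-- **Lemma 4.3.** Let `A` be a symmetric integer matrix with characteristic polynomial
`φ` and discriminant `Δ_A`, and `p` a prime factor of `Δ_A` with `p² ∤ Δ_A`.  Then
`φ(x) = (x - λ₀)² φ̂(x)` over `𝔽_p` for some integer `λ₀` and some square-free `φ̂`
with `p ∤ φ̂(λ₀)`. -/
theorem charpoly_decomp_of_exactly_dvd_disc {n : ℕ} (A : Matrix (Fin n) (Fin n) ℤ)
    (hA : A.IsSymm) (p : ℕ) (hp : p.Prime)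
    (hdvd : (p : ℤ) ∣ matrixDisc A) (hndvd : ¬ (p : ℤ) ^ 2 ∣ matrixDisc A) :
    ∃ (lam : ℤ) (phihat : Polynomial (ZMod p)), Squarefree phihat ∧
      (A.charpoly).map (Int.castRingHom (ZMod p)) =
        (Polynomial.X - Polynomial.C ((lam : ZMod p))) ^ 2 * phihat ∧
      phihat.eval ((lam : ZMod p)) ≠ 0 := by
  have : Fact p.Prime := ⟨hp⟩
  have hmon := A.charpoly_monic
  have hunit : IsUnit ((-1 : ℤ) ^ (n * (n - 1) / 2)) := isUnit_neg_one.pow _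
  rw [matrixDisc, hunit.dvd_mul_left] at hdvd hndvd
  have h0 : Algebra.norm ℤ (AdjoinRoot.mk A.charpoly (derivative A.charpoly)) ≠ 0 := by
    intro h
    simp [h] at hndvd
  have hne : A.charpoly.map (Int.castRingHom (ZMod p)) ≠ 0 := (hmon.map _).ne_zero
  obtain ⟨a, h, hsq, hfac, hev⟩ := exists_sq_mul_squarefree hne
    (by rw [derivative_map]; exact not_isCoprime_of_dvd_norm hmon h0 hdvd)
    (by
      intro d hd hd'
      rw [derivative_map] at hd'
      by_contra! h2
      exact hndvd ((pow_dvd_pow _ h2).trans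
        (pow_natDegree_dvd_norm hmon (ne_zero_of_dvd_ne_zero hne hd) hd hd')))
  obtain ⟨lam, rfl⟩ := ZMod.intCast_surjective a
  exact ⟨lam, h, hsq, hfac, hev⟩
end

section
/- Let p be an odd prime and let A be an n×n symmetric integer matrix with characteristic polynomial φ(x) such that over F_p one has φ(x) = (x − λ_0)²·φ̂(x), where λ_0 is an integer, φ̂ is square-free over F_p, and p does not divide φ̂(λ_0). Then the congruence u(x)·φ(x) ≡ v(x)·φ'(x) (mod p²) has a solution in integer polynomials u, v with u ≢ 0 (mod p), v ≢ 0 (mod p), deg(v) < deg(φ), and deg(u) < deg(φ'), if and only if p² divides det(λ_0 I − A). -/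
/-!
Since `det(l I - A) = φ(l)`, everything can be read off the monic integer polynomial `φ` and an
integer `l` whose reduction `a` is a root of `φ` mod `p` of multiplicity exactly two.
Since `φ''(l) ≡ 2 φ̂(l)` is a unit mod `p`, the simple root `l` of `φ'` mod `p` lifts to a
root `t ≡ l` of `φ'` mod `p²`, and a Taylor expansion gives `φ(t) ≡ φ(l)` mod `p²`
(`exists_critical_lift`).

If `u φ ≡ v φ'` mod `p²`, evaluation at `t` yields `u(t) φ(l) ≡ 0` mod `p²`, so it suffices that
`p ∤ u(l)`.  This holds because mod `p` the gcd of `φ` and `φ'` is exactly `x - a`: were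
`u(a) = 0`, then `φ` would divide `v` mod `p`, contradicting `deg v < deg φ`
(`eval_ne_zero_of_mul_eq`).

If `p² ∣ φ(l)`, then `t` is a double root mod `p²`, say `φ ≡ (x - t)² g`, and
`v = (x - t) g`, `u = 2 g + (x - t) g'` is a solution.
-/

open Polynomial Matrix

/-- The cofactors of `x - a` in `f = (x - a)² h` and in `f'` are coprime, so a relation
`u f = v f'` with `v` nonzero of smaller degree than `f` forces `u(a) ≠ 0`. -/
lemma eval_ne_zero_of_mul_eq {K : Type*} [Field K] [PerfectField K] (h2 : (2 : K) ≠ 0) (a : K)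
    (h u v : K[X]) (hsf : Squarefree h) (hne : h.eval a ≠ 0) (hv : v ≠ 0)
    (hdeg : v.degree < ((X - C a) ^ 2 * h).degree)
    (heq : u * ((X - C a) ^ 2 * h) = v * derivative ((X - C a) ^ 2 * h)) :
    u.eval a ≠ 0 := by
  intro hu
  have hsep : IsCoprime h (derivative h) := PerfectField.separable_iff_squarefree.mpr hsf
  have hL : Irreducible (X - C a) := irreducible_X_sub_C a
  have hLh : IsCoprime (X - C a) h :=
    (hL.coprime_iff_not_dvd).mpr fun hd => hne (dvd_iff_isRoot.mp hd)
  set ψ : K[X] := C 2 * h + (X - C a) * derivative h with hψ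
  have hψa : ψ.eval a ≠ 0 := by simp [hψ, h2, hne]
  have hder : derivative ((X - C a) ^ 2 * h) = (X - C a) * ψ := by
    simp only [derivative_mul, derivative_pow, derivative_sub, derivative_X, derivative_C, hψ]
    push_cast
    simp only [map_ofNat]
    ring
  have hcop : IsCoprime ((X - C a) * h) ψ := by
    refine IsCoprime.mul_left ?_ ?_
    · exact (hL.coprime_iff_not_dvd).mpr fun hd => hψa (dvd_iff_isRoot.mp hd)
    · have h1 : IsCoprime h ((X - C a) * derivative h) := hLh.symm.mul_right hsep
      rw [hψ, add_comm]
      exact h1.add_mul_right_right (C 2)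
  have heq2 : u * ((X - C a) * h) = v * ψ := by
    apply mul_left_cancel₀ (X_sub_C_ne_zero a)
    rw [hder] at heq
    linear_combination heq
  obtain ⟨w, hw⟩ := hcop.dvd_of_dvd_mul_right (Dvd.intro_left u heq2)
  have hh0 : h ≠ 0 := hsf.ne_zero
  have huw : u = w * ψ := by
    apply mul_right_cancel₀ (mul_ne_zero (X_sub_C_ne_zero a) hh0)
    rw [heq2, hw]
    ring
  have hwa : w.IsRoot a := by
    rw [huw, eval_mul] at hu
    exact (mul_eq_zero.mp hu).resolve_right hψa
  obtain ⟨z, hz⟩ := dvd_iff_isRoot.mpr hwa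
  refine not_lt_of_ge (degree_le_of_dvd (Dvd.intro z ?_) hv) hdeg
  rw [hw, hz]
  ring

/-- A Newton step: when `f'(l) ≡ 0` and `f''(l)` is a unit mod `p`, the root `l` of `f'`
lifts to a root mod `p²`, and moving to it does not change the value of `f` mod `p²`. -/
lemma exists_critical_lift (f : ℤ[X]) (p l : ℤ) (h1 : p ∣ (derivative f).eval l)
    (h2 : IsCoprime ((derivative (derivative f)).eval l) p) :
    ∃ s : ℤ, p ^ 2 ∣ (derivative f).eval (l + p * s) ∧
      p ^ 2 ∣ f.eval (l + p * s) - f.eval l := by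
  obtain ⟨b, hb⟩ := h1
  obtain ⟨x, y, hxy⟩ := h2
  refine ⟨-b * x, ?_, ?_⟩
  · obtain ⟨k, hk⟩ := (derivative f).binomExpansion l (p * (-b * x))
    rw [hk, hb]
    exact ⟨b * y + k * (b * x) ^ 2, by linear_combination (-p * b) * hxy⟩
  · obtain ⟨k, hk⟩ := f.binomExpansion l (p * (-b * x))
    rw [hk, hb]
    exact ⟨-b ^ 2 * x + k * (b * x) ^ 2, by ring⟩

lemma exists_taylor_two (f : ℤ[X]) (t : ℤ) :
    ∃ g : ℤ[X], f = (X - C t) * ((X - C t) * g) +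
      C ((derivative f).eval t) * (X - C t) + C (f.eval t) := by
  obtain ⟨q, hq⟩ := X_sub_C_dvd_sub_C_eval (p := f) (a := t)
  obtain ⟨g, hg⟩ := X_sub_C_dvd_sub_C_eval (p := q) (a := t)
  have hf : f = (X - C t) * q + C (f.eval t) := by linear_combination hq
  have hd : (derivative f).eval t = q.eval t := by
    rw [hf]; simp
  refine ⟨g, ?_⟩
  rw [hd]
  linear_combination hq + (X - C t) * hg

/-- The equivalence for an arbitrary monic integer polynomial. -/
lemma monic_congruence_iff (f : ℤ[X]) (hf : f.Monic) (p : ℕ) (hp : p.Prime) (hodd : p ≠ 2)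
    (l : ℤ) (h : (ZMod p)[X]) (hsf : Squarefree h)
    (hfac : f.map (Int.castRingHom (ZMod p)) = (X - C ((l : ZMod p))) ^ 2 * h)
    (hne : h.eval ((l : ZMod p)) ≠ 0) :
    (∃ u v : ℤ[X],
        u.map (Int.castRingHom (ZMod p)) ≠ 0 ∧ v.map (Int.castRingHom (ZMod p)) ≠ 0 ∧
        v.degree < f.degree ∧ u.degree < (derivative f).degree ∧
        (u * f - v * derivative f).map (Int.castRingHom (ZMod (p ^ 2))) = 0) ↔
      (p : ℤ) ^ 2 ∣ f.eval l := by
  have : Fact p.Prime := ⟨hp⟩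
  have hpZ : Prime (p : ℤ) := Nat.prime_iff_prime_int.mp hp
  have h2 : (2 : ZMod p) ≠ 0 := by
    intro h0
    have : p ∣ 2 := (ZMod.natCast_eq_zero_iff 2 p).mp (by exact_mod_cast h0)
    exact hodd ((Nat.prime_dvd_prime_iff_eq hp Nat.prime_two).mp this)
  have hev (g : ℤ[X]) (x : ℤ) : ((g.eval x : ℤ) : ZMod p) =
      (g.map (Int.castRingHom (ZMod p))).eval (x : ZMod p) := by
    simp
  have hd2 : ¬ (p : ℤ) ∣ (derivative (derivative f)).eval l := by
    rw [← ZMod.intCast_zmod_eq_zero_iff_dvd, hev, ← derivative_map, ← derivative_map, hfac]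
    simp [derivative_pow, h2, hne]
  have hd1 : (p : ℤ) ∣ (derivative f).eval l := by
    rw [← ZMod.intCast_zmod_eq_zero_iff_dvd, hev, ← derivative_map, hfac]
    simp [derivative_pow]
  obtain ⟨s, hs1, hs2⟩ := exists_critical_lift f p l hd1
    ((hpZ.coprime_iff_not_dvd.mpr hd2).symm)
  set t : ℤ := l + p * s with ht
  have htl : (t : ZMod p) = (l : ZMod p) := by simp [ht]
  have hfmonic := hf.map (Int.castRingHom (ZMod p))
  constructor
  · rintro ⟨u, v, -, hv, hdv, -, heq⟩
    have hdvd : (p : ℤ) ^ 2 ∣ u.eval t * f.eval t - v.eval t * (derivative f).eval t := by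
      have h0 : (((u * f - v * derivative f).eval t : ℤ) : ZMod (p ^ 2)) = 0 := by
        have := eval_intCast_map (Int.castRingHom (ZMod (p ^ 2))) (u * f - v * derivative f) t
        rw [heq, eval_zero, eq_intCast] at this
        exact this.symm
      have h3 := (ZMod.intCast_zmod_eq_zero_iff_dvd _ _).mp h0
      simpa using h3
    have heqp : (u * f - v * derivative f).map (Int.castRingHom (ZMod p)) = 0 := by
      have := congrArg
        (Polynomial.map (ZMod.castHom (dvd_pow_self p two_ne_zero) (ZMod p))) heq
      rw [Polynomial.map_map, Polynomial.map_zero] at this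
      rwa [RingHom.ext_int (Int.castRingHom (ZMod p)) _]
    rw [Polynomial.map_sub, Polynomial.map_mul, Polynomial.map_mul, ← derivative_map, hfac,
      sub_eq_zero] at heqp
    have hul : ¬ (p : ℤ) ∣ u.eval t := by
      rw [← ZMod.intCast_zmod_eq_zero_iff_dvd, hev, htl]
      refine eval_ne_zero_of_mul_eq h2 _ h _ _ hsf hne hv ?_ heqp
      rw [← hfac, hf.degree_map]
      exact degree_map_le.trans_lt hdv
    have h4 : (p : ℤ) ^ 2 ∣ u.eval t * f.eval t :=
      (dvd_sub_left (hs1.mul_left _)).mp hdvd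
    have h5 : (p : ℤ) ^ 2 ∣ f.eval t :=
      ((hpZ.coprime_iff_not_dvd.mpr hul).pow_left).dvd_of_dvd_mul_left h4
    exact (dvd_sub_right h5).mp hs2
  · intro hl
    have hft : (p : ℤ) ^ 2 ∣ f.eval t := (dvd_sub_left hl).mp hs2
    obtain ⟨g, hg⟩ := exists_taylor_two f t
    generalize f.eval t = c₀ at hft hg
    generalize (derivative f).eval t = c₁ at hs1 hg
    set v : ℤ[X] := (X - C t) * g with hv
    set u : ℤ[X] := C 2 * g + (X - C t) * derivative g with hu
    have hder : derivative f = (X - C t) * u + C c₁ := by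
      rw [hg]
      simp only [hv, hu, derivative_mul, derivative_add, derivative_sub, derivative_X,
        derivative_C, map_ofNat]
      ring
    have hcast (c : ℤ) (hc : (p : ℤ) ^ 2 ∣ c) : (c : ZMod p) = 0 :=
      (ZMod.intCast_zmod_eq_zero_iff_dvd _ _).mpr ((dvd_pow_self _ two_ne_zero).trans hc)
    have hu0 : u.map (Int.castRingHom (ZMod p)) ≠ 0 := by
      intro h0
      apply hd2
      rw [← ZMod.intCast_zmod_eq_zero_iff_dvd, hev, ← derivative_map, hder]
      simp only [Polynomial.map_add, Polynomial.map_mul, h0, Polynomial.map_C]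
      simp
    have hv0 : v.map (Int.castRingHom (ZMod p)) ≠ 0 := by
      intro h0
      apply hfmonic.ne_zero
      rw [hg]
      simp only [Polynomial.map_add, Polynomial.map_mul, h0, Polynomial.map_C]
      simp [hcast c₀ hft, hcast c₁ hs1]
    refine ⟨u, v, hu0, hv0, ?_, ?_, ?_⟩
    · have hq : f = (X - C t) * (v + C c₁) + C c₀ := by linear_combination hg
      have hvc : v + C c₁ ≠ 0 := by
        intro h0
        apply hv0
        rw [eq_neg_of_add_eq_zero_left h0, Polynomial.map_neg, Polynomial.map_C, eq_intCast,
          hcast c₁ hs1, C_0, neg_zero]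
      apply degree_lt_degree
      rw [hq, natDegree_add_C, natDegree_mul (X_sub_C_ne_zero t) hvc, natDegree_add_C,
        natDegree_X_sub_C]
      omega
    · have hune : u ≠ 0 := fun h0 => hu0 (by simp [h0])
      apply degree_lt_degree
      rw [hder, natDegree_add_C, natDegree_mul (X_sub_C_ne_zero t) hune, natDegree_X_sub_C]
      omega
      -- The relation is exact up to terms carrying a factor `c₀` or `c₁`.
    · have hid : u * f - v * derivative f = C c₁ * (u * (X - C t) - v) + C c₀ * u := by
        rw [hder]
        linear_combination u * hg
      have hc (c : ℤ) (hc : (p : ℤ) ^ 2 ∣ c) : (c : ZMod (p ^ 2)) = 0 :=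
        (ZMod.intCast_zmod_eq_zero_iff_dvd _ _).mpr (by exact_mod_cast hc)
      rw [hid, Polynomial.map_add, Polynomial.map_mul, Polynomial.map_mul, Polynomial.map_C,
        Polynomial.map_C]
      simp [hc c₀ hft, hc c₁ hs1]

/-- **Lemma 4.4.** Let `p` be an odd prime and `A` a symmetric integer matrix whose
characteristic polynomial satisfies `φ(x) = (x - λ₀)² φ̂(x)` over `𝔽_p`, with `φ̂`
square-free and `p ∤ φ̂(λ₀)`.  Then the congruence `u·φ ≡ v·φ' (mod p²)` has a solution
in integer polynomials `u, v` with `u, v ≢ 0 (mod p)`, `deg(v) < deg(φ)` and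
`deg(u) < deg(φ')`, if and only if `p² ∣ det(λ₀I - A)`. -/
theorem congruence_solution_iff_p_sq_dvd_det {n : ℕ} (A : Matrix (Fin n) (Fin n) ℤ)
    (hA : A.IsSymm) (p : ℕ) (hp : p.Prime) (hodd : p ≠ 2)
    (lam : ℤ) (phihat : Polynomial (ZMod p)) (hsf : Squarefree phihat)
    (hfac : (A.charpoly).map (Int.castRingHom (ZMod p)) =
      (Polynomial.X - Polynomial.C ((lam : ZMod p))) ^ 2 * phihat)
    (hne : phihat.eval ((lam : ZMod p)) ≠ 0) :
    (∃ u v : Polynomial ℤ,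
        u.map (Int.castRingHom (ZMod p)) ≠ 0 ∧ v.map (Int.castRingHom (ZMod p)) ≠ 0 ∧
        v.degree < (A.charpoly).degree ∧
        u.degree < (Polynomial.derivative A.charpoly).degree ∧
        (u * A.charpoly - v * Polynomial.derivative A.charpoly).map
          (Int.castRingHom (ZMod (p ^ 2))) = 0) ↔
      (p : ℤ) ^ 2 ∣ (lam • (1 : Matrix (Fin n) (Fin n) ℤ) - A).det := by
  rw [show (lam • (1 : Matrix (Fin n) (Fin n) ℤ) - A).det = A.charpoly.eval lam by
    rw [Matrix.eval_charpoly, Matrix.scalar_apply, Matrix.smul_one_eq_diagonal]]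
  exact monic_congruence_iff A.charpoly A.charpoly_monic p hp hodd lam phihat hsf hfac hne
end

section
/- Let A be an n×n symmetric integer matrix with discriminant Δ_A, and let Q be a rational orthogonal matrix of level ℓ such that Q^T A Q is a symmetric integer matrix. Let p be an odd prime factor of Δ_A. If p² does not divide Δ_A, then p does not divide ℓ. -/
/-!
Let `φ` be the characteristic polynomial of `A`. Up to sign the discriminant of `A` is `det φ'(A)`
(`norm_mk_charpoly_eq_det`). Suppose `p ∣ ℓ` and put `U = ℓ Q` and `B = Qᵀ A Q`. Then
`Uᵀ U = ℓ² I ≡ 0 (mod p²)`, `A U = U B`, and `U` is nonzero modulo `p` by minimality of `ℓ`, so the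
range of `U` modulo `p` is a nonzero totally isotropic `A`-invariant subspace.

Suppose that `p` divides `det φ'(A)` exactly once. Then `φ'(A)` has a one-dimensional kernel modulo `p`
(`exists_adjugate_ne_zero`). An isotropic eigenvector of a symmetric matrix belongs to a multiple
eigenvalue (`derivative_charpoly_eval_eq_zero`), so this kernel contains, and is therefore spanned by,
an eigenvector `w = U Y` of `A`. Its eigenvalue `α` satisfies `φ'(α) ≡ 0` and `φ''(α) ≢ 0 (mod p)`
(`exists_eigenvector_mod_p`).

Write `A w = α w + p s`. Since `w · w` and `w · A w` vanish modulo `p²`, `w` is orthogonal to both `w`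
and `s` modulo `p`. Hence `(A - α) x ≡ t w - s (mod p)` is solvable for every `t`, which makes
`w + p x` an eigenvector of `A` modulo `p²` with eigenvalue `α + p t`. As `φ''(α)` is invertible, `t` can
be chosen with `φ'(α + p t) ≡ 0 (mod p²)`. Then `φ'(A)` kills the primitive vector `w + p x` modulo
`p²`, so `p² ∣ det φ'(A)` (`sq_dvd_det_of_eigenvector`), a contradiction.
-/


open Polynomial Matrix

/-! ### The discriminant as a determinant -/

/-- The determinant of `f(M)` depends only on `f` and the characteristic polynomial of `M`: factor
`f` into linear factors `X - r` and use `det (M - r) = ± χ_M(r)`. -/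
lemma det_aeval_eq_of_charpoly_eq {K ι κ : Type*} [Field K] [IsAlgClosed K]
    [Fintype ι] [DecidableEq ι] [Fintype κ] [DecidableEq κ]
    (M : Matrix ι ι K) (N : Matrix κ κ K) (h : M.charpoly = N.charpoly) (f : K[X]) :
    (aeval M f).det = (aeval N f).det := by
  have hc : Fintype.card ι = Fintype.card κ := by
    rw [← M.charpoly_natDegree_eq_dim, h, N.charpoly_natDegree_eq_dim]
  have key : ∀ r : K, (aeval M (X - C r)).det = (aeval N (X - C r)).det := by
    intro r
    have h1 := M.eval_charpoly r
    have h2 := N.eval_charpoly r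
    have e1 : aeval M (X - C r) = -(Matrix.scalar _ r - M) := by
      simp [Matrix.algebraMap_eq_diagonal, Matrix.scalar_apply, Pi.algebraMap_def]
    have e2 : aeval N (X - C r) = -(Matrix.scalar _ r - N) := by
      simp [Matrix.algebraMap_eq_diagonal, Matrix.scalar_apply, Pi.algebraMap_def]
    rw [e1, e2, Matrix.det_neg, Matrix.det_neg, ← h1, ← h2, hc, h]
  have hs : ∀ s : Multiset K,
      (aeval M (s.map fun r => X - C r).prod).det = (aeval N (s.map fun r => X - C r).prod).det := by
    intro s
    induction s using Multiset.induction_on with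
    | empty => simp
    | cons r s ih =>
      simp only [Multiset.map_cons, Multiset.prod_cons, map_mul, Matrix.det_mul, ih, key]
  rw [(IsAlgClosed.splits f).eq_prod_roots, map_mul, map_mul, Matrix.det_mul, Matrix.det_mul, hs]
  simp [Matrix.algebraMap_eq_diagonal, Matrix.det_diagonal, hc, Finset.prod_const]

lemma aeval_map_intCast {ι R : Type*} [Fintype ι] [DecidableEq ι] [CommRing R]
    (M : Matrix ι ι ℤ) (f : ℤ[X]) :
    (aeval M f).map (Int.cast : ℤ → R) =
      aeval (M.map (Int.cast : ℤ → R)) (f.map (Int.castRingHom R)) := by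
  have := map_aeval_eq_aeval_map (φ := Int.castRingHom R)
    (ψ := (Int.castRingHom R).mapMatrix (m := ι)) (by ext; simp) f M
  exact this

/-- Multiplication by the root of `charpoly A` on `ℤ[x]/(charpoly A)` is represented by a matrix
with the same characteristic polynomial as `A`, so norms from this ring are determinants of
polynomials in `A`. In particular the discriminant of `A` is, up to sign, `det φ'(A)`. -/
lemma norm_mk_charpoly_eq_det {n : ℕ} (A : Matrix (Fin n) (Fin n) ℤ) (f : ℤ[X]) :
    Algebra.norm ℤ (AdjoinRoot.mk A.charpoly f) = (aeval A f).det := by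
  have hm := A.charpoly_monic
  set b := AdjoinRoot.powerBasis' hm with hb
  have hroot : minpoly ℤ b.gen = A.charpoly := by
    symm
    apply minpoly.unique' ℤ b.gen hm
    · simp [hb, AdjoinRoot.aeval_eq]
    · intro q hq
      by_contra! hcon
      obtain ⟨h0, h1⟩ := hcon
      rw [hb, AdjoinRoot.powerBasis'_gen, AdjoinRoot.aeval_eq, AdjoinRoot.mk_eq_zero] at h1
      exact absurd hq (not_lt.2 (degree_le_of_dvd h1 h0))
  have hL : (Algebra.leftMulMatrix b.basis b.gen).charpoly = A.charpoly := by
    rw [charpoly_leftMulMatrix, hroot]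
  have hmk : AdjoinRoot.mk A.charpoly f = aeval b.gen f := by
    rw [hb, AdjoinRoot.powerBasis'_gen, AdjoinRoot.aeval_eq]
  rw [Algebra.norm_eq_matrix_det b.basis, hmk, ← aeval_algHom_apply]
  apply Int.cast_injective (α := ℂ)
  have hd : ∀ {m : ℕ} (M : Matrix (Fin m) (Fin m) ℤ), ((M.det : ℤ) : ℂ) =
      (M.map (Int.cast : ℤ → ℂ)).det := fun M => (Int.castRingHom ℂ).map_det M
  rw [hd, hd, aeval_map_intCast, aeval_map_intCast]
  apply det_aeval_eq_of_charpoly_eq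
  have hcm : ∀ {m : ℕ} (M : Matrix (Fin m) (Fin m) ℤ), (M.map (Int.cast : ℤ → ℂ)).charpoly =
      M.charpoly.map (Int.castRingHom ℂ) := fun M => M.charpoly_map (Int.castRingHom ℂ)
  rw [hcm, hcm, hL]

/-! ### Eigenvectors of symmetric matrices over a field -/

/-- Action of `f(M)` on a Jordan chain `w, u` of length two. -/
lemma aeval_mulVec_of_eigen {ι R : Type*} [Fintype ι] [DecidableEq ι] [CommRing R]
    (M : Matrix ι ι R) (a : R) (w u : ι → R) (hw : M *ᵥ w = a • w) (hu : M *ᵥ u = a • u + w)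
    (f : R[X]) :
    aeval M f *ᵥ u = f.eval a • u + (derivative f).eval a • w := by
  have hpw : ∀ k : ℕ, M ^ k *ᵥ w = a ^ k • w := by
    intro k
    induction k with
    | zero => simp
    | succ k ih => rw [pow_succ, ← mulVec_mulVec, hw, mulVec_smul, ih, smul_smul, pow_succ']
  have hpu : ∀ k : ℕ, M ^ k *ᵥ u = a ^ k • u + (k * a ^ (k - 1)) • w := by
    intro k
    induction k with
    | zero => simp
    | succ k ih =>
      rw [pow_succ, ← mulVec_mulVec, hu, mulVec_add, mulVec_smul, ih, hpw]
      rcases k with _ | k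
      · simp
      · ext i
        simp
        ring
  induction f using Polynomial.induction_on' with
  | add p q hp hq =>
    simp only [map_add, add_mulVec, hp, hq, eval_add, add_smul]
    abel
  | monomial k c =>
    simp only [aeval_monomial, ← mulVec_mulVec, hpu, Algebra.algebraMap_eq_smul_one,
      smul_mulVec, one_mulVec, derivative_monomial, eval_monomial]
    ext i
    simp
    ring

lemma aeval_mulVec_of_eigenvector {ι R : Type*} [Fintype ι] [DecidableEq ι] [CommRing R]
    (M : Matrix ι ι R) (a : R) (w : ι → R) (hw : M *ᵥ w = a • w) (f : R[X]) :
    aeval M f *ᵥ w = f.eval a • w := by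
  simpa using aeval_mulVec_of_eigen M a 0 w (by simp) (by simpa using hw) f

/-- If the cofactor of `N` at `(j, i)` is nonzero, a kernel vector is determined by its `i`-th
coordinate: it is also in the kernel of `N` with row `j` replaced by the `i`-th unit vector, whose
determinant is `adj(N) i j`. -/
lemma eq_zero_of_adjugate_ne_zero {ι K : Type*} [Fintype ι] [DecidableEq ι] [Field K]
    (N : Matrix ι ι K) {i j : ι} (h : N.adjugate i j ≠ 0) (v : ι → K) (hv : N *ᵥ v = 0)
    (hi : v i = 0) : v = 0 := by
  rw [adjugate_apply] at h
  apply eq_zero_of_mulVec_eq_zero h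
  ext r
  by_cases hr : r = j
  · subst hr
    simp [mulVec, hi]
  · simpa [mulVec, updateRow_ne hr] using congrFun hv r

/-- The Fredholm alternative for a symmetric matrix: its range is the orthogonal complement of its
kernel. -/
lemma exists_mulVec_eq_of_isSymm {ι K : Type*} [Fintype ι] [DecidableEq ι] [Field K]
    (M : Matrix ι ι K) (hM : M.IsSymm) (b : ι → K)
    (h : ∀ y, M *ᵥ y = 0 → y ⬝ᵥ b = 0) : ∃ x, M *ᵥ x = b := by
  by_contra hne
  have hb : b ∉ LinearMap.range M.mulVecLin := by simpa using hne
  obtain ⟨f, hf, hle⟩ := Submodule.exists_le_ker_of_notMem hb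
  set y : ι → K := fun i => f (Pi.single i 1) with hy
  have hfy : ∀ z, f z = y ⬝ᵥ z := by
    intro z
    rw [LinearMap.pi_apply_eq_sum_univ f z]
    simp only [dotProduct, hy, smul_eq_mul]
    refine Finset.sum_congr rfl fun i _ => ?_
    rw [mul_comm]
    congr 2
    ext j
    simp [Pi.single_apply, eq_comm]
  apply hf
  rw [hfy]
  apply h
  have : ∀ x, (M *ᵥ y) ⬝ᵥ x = 0 := by
    intro x
    have h0 : f (M *ᵥ x) = 0 := hle ⟨x, rfl⟩
    rw [hfy, dotProduct_mulVec, ← mulVec_transpose, hM.eq] at h0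
    exact h0
  exact dotProduct_eq_zero_iff.1 this

/-- An eigenvalue of a symmetric matrix with a nonzero isotropic eigenvector `v` is a multiple root
of the characteristic polynomial. If the generalized eigenspace were spanned by `v`, then `v`, being
orthogonal to the kernel of `M - a`, would lie in the range of `M - a`, which gives a Jordan chain of
length two. -/
lemma derivative_charpoly_eval_eq_zero {ι K : Type*} [Fintype ι] [DecidableEq ι] [Field K]
    (M : Matrix ι ι K) (hM : M.IsSymm) (a : K) (v : ι → K) (hv0 : v ≠ 0)
    (hv : M *ᵥ v = a • v) (hvv : v ⬝ᵥ v = 0) : (derivative M.charpoly).eval a = 0 := by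
  set φ : Module.End K (ι → K) := M.mulVecLin with hφ
  have hsub : ∀ y, (M - a • (1 : Matrix ι ι K)) *ᵥ y = M *ᵥ y - a • y := by
    intro y; simp [sub_mulVec, smul_mulVec]
  have hmem : ∀ y, M *ᵥ (M *ᵥ y - a • y) = a • (M *ᵥ y - a • y) → y ∈ φ.genEigenspace a 2 := by
    intro y hy
    rw [show (2 : ℕ∞) = ((2 : ℕ) : ℕ∞) from rfl, Module.End.mem_genEigenspace_nat]
    simp [pow_two, hφ, hy]
  have hfr : 1 < Module.finrank K (φ.genEigenspace a 2) := by
    by_contra! hle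
    have hvm : v ∈ φ.genEigenspace a 2 := hmem v (by simp [hv])
    have hspan : ∀ y ∈ φ.genEigenspace a 2, ∃ c : K, c • v = y := by
      intro y hy
      obtain ⟨g, hg⟩ := finrank_le_one_iff.1 hle
      obtain ⟨c, hc⟩ := hg ⟨v, hvm⟩
      obtain ⟨d, hd⟩ := hg ⟨y, hy⟩
      have hc' : c • (g : ι → K) = v := congrArg Subtype.val hc
      have hd' : d • (g : ι → K) = y := congrArg Subtype.val hd
      have hc0 : c ≠ 0 := by
        rintro rfl
        exact hv0 (by simpa using hc'.symm)
      exact ⟨d * c⁻¹, by rw [← hc', ← hd', smul_smul, mul_assoc, inv_mul_cancel₀ hc0, mul_one]⟩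
    obtain ⟨u, hu⟩ := exists_mulVec_eq_of_isSymm (M - a • (1 : Matrix ι ι K))
      (hM.sub (by simp [IsSymm])) v (by
        intro y hy
        rw [hsub, sub_eq_zero] at hy
        obtain ⟨c, rfl⟩ := hspan y (hmem y (by simp [hy]))
        simp [hvv])
    rw [hsub] at hu
    obtain ⟨c, rfl⟩ := hspan u (hmem u (by rw [hu, hv]))
    apply hv0
    rw [← hu, mulVec_smul, hv, smul_comm, sub_self]
  have h1 := hfr.trans_le (LinearMap.finrank_genEigenspace_le φ a 2)
  have hφc : φ.charpoly = M.charpoly := by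
    rw [hφ, ← Matrix.toLin'_apply', Matrix.charpoly_toLin']
  rw [hφc] at h1
  exact ((one_lt_rootMultiplicity_iff_isRoot M.charpoly_monic.ne_zero).1 h1).2

lemma exists_eigenvector_in_range {ι K : Type*} [Fintype ι] [DecidableEq ι] [Field K]
    [IsAlgClosed K] (A U B : Matrix ι ι K) (hAU : A * U = U * B) (hU : U ≠ 0) :
    ∃ (y : ι → K) (a : K), U *ᵥ y ≠ 0 ∧ A *ᵥ (U *ᵥ y) = a • (U *ᵥ y) := by
  set V := LinearMap.range U.mulVecLin with hV
  have hmaps : ∀ v ∈ V, A.mulVecLin v ∈ V := by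
    rintro _ ⟨y, rfl⟩
    exact ⟨B *ᵥ y, by simp [mulVec_mulVec, hAU]⟩
  have : Nontrivial V := by
    rw [Submodule.nontrivial_iff_ne_bot]
    intro h
    rw [hV, LinearMap.range_eq_bot] at h
    apply hU
    apply Matrix.toLin'.injective
    rw [Matrix.toLin'_apply', h, map_zero]
  obtain ⟨a, ha⟩ := Module.End.exists_eigenvalue (A.mulVecLin.restrict hmaps)
  obtain ⟨⟨v, y, rfl⟩, hv⟩ := ha.exists_hasEigenvector
  refine ⟨y, a, fun h => hv.2 (Subtype.ext h), ?_⟩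
  exact congrArg Subtype.val hv.apply_eq_smul

/-- Let `A` be symmetric, let the range of `U` be a nonzero totally isotropic `A`-invariant subspace,
and let `φ'(A)` have rank exactly `n - 1` (`φ` being the characteristic polynomial). Then the kernel
of `φ'(A)` is a line spanned by a vector `U y`, hence `U y` is an eigenvector of `A`. Its eigenvalue
`a` is a root of `φ'` but not of `φ''`, and has a one-dimensional eigenspace. -/
lemma exists_eigenvector_mod_p {ι F : Type*} [Fintype ι] [DecidableEq ι] [Field F]
    (A U B : Matrix ι ι F) (hA : A.IsSymm) (hAU : A * U = U * B) (hU : U ≠ 0)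
    (hUU : Uᵀ * U = 0) (hdet : (aeval A (derivative A.charpoly)).det = 0)
    {i j : ι} (hadj : (aeval A (derivative A.charpoly)).adjugate i j ≠ 0) :
    ∃ (y : ι → F) (a : F), U *ᵥ y ≠ 0 ∧ A *ᵥ (U *ᵥ y) = a • (U *ᵥ y) ∧
      (derivative A.charpoly).eval a = 0 ∧
      (derivative (derivative A.charpoly)).eval a ≠ 0 ∧
      ∀ z, A *ᵥ z = a • z → ∃ r : F, z = r • (U *ᵥ y) := by
  set f := derivative A.charpoly with hf
  set N := aeval A f with hN
  set c : ι → F := fun r => N.adjugate r j with hc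
  have hNc : N *ᵥ c = 0 := by
    have := N.mul_adjugate
    rw [hdet, zero_smul] at this
    ext r
    exact congrFun (congrFun this r) j
  have hci : c i ≠ 0 := hadj
  have hline : ∀ z, N *ᵥ z = 0 → z = (z i / c i) • c := by
    intro z hz
    rw [← sub_eq_zero]
    apply eq_zero_of_adjugate_ne_zero N hadj
    · rw [mulVec_sub, mulVec_smul, hz, hNc]; simp
    · simp [hci]
  -- Over the algebraic closure the range of `U` contains an eigenvector of `A`, which is isotropic
  -- and therefore in the line `ker N`, spanned by the `F`-rational vector `c`.
  have hy : ∃ y, U *ᵥ y = c := by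
    let k := AlgebraicClosure F
    let e : F →+* k := algebraMap F k
    have hinj : Function.Injective e := e.injective
    have hfk : (A.map e).charpoly = A.charpoly.map e := A.charpoly_map e
    obtain ⟨y, a, hy0, hya⟩ := exists_eigenvector_in_range (A.map e) (U.map e) (B.map e)
      (by rw [← Matrix.map_mul, ← Matrix.map_mul, hAU])
      (fun h => hU (by
        ext r s
        apply hinj
        simpa using congrFun (congrFun h r) s))
    set v := U.map e *ᵥ y with hv
    have hvv : v ⬝ᵥ v = 0 := by
      rw [hv, dotProduct_mulVec, ← mulVec_transpose, mulVec_mulVec, ← transpose_map,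
        ← Matrix.map_mul, hUU]
      simp
    have hfa : (f.map e).eval a = 0 := by
      rw [hf, ← derivative_map, ← hfk]
      exact derivative_charpoly_eval_eq_zero _ (hA.map e) a v hy0 hya hvv
    have hNk : N.map e = aeval (A.map e) (f.map e) :=
      map_aeval_eq_aeval_map (φ := e) (ψ := e.mapMatrix (m := ι))
        (by ext; simp [Matrix.algebraMap_matrix_apply]; split_ifs <;> simp) f A
    have hNv : N.map e *ᵥ v = 0 := by
      rw [hNk, aeval_mulVec_of_eigenvector _ a v hya, hfa, zero_smul]
    have hadjk : (N.map e).adjugate i j ≠ 0 := by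
      rw [show (N.map e).adjugate = N.adjugate.map e from (e.map_adjugate N).symm]
      simpa using hadj
    have hNck : N.map e *ᵥ (fun r => e (c r)) = 0 := by
      ext r
      have := (e.map_mulVec N c r).symm
      rw [hNc] at this
      simpa [Function.comp_def] using this
    have heci : e (c i) ≠ 0 := by simpa using hci
    have hvc : v = (v i / e (c i)) • (fun r => e (c r)) := by
      rw [← sub_eq_zero]
      apply eq_zero_of_adjugate_ne_zero _ hadjk
      · rw [mulVec_sub, mulVec_smul, hNv, hNck]; simp
      · simp only [Pi.sub_apply, Pi.smul_apply, smul_eq_mul]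
        rw [div_mul_cancel₀ _ heci, sub_self]
    set μ := v i / e (c i) with hμ
    have hμ0 : μ ≠ 0 := by
      rintro h
      rw [h, zero_smul] at hvc
      exact hy0 hvc
    have hy1 : U.map e *ᵥ (μ⁻¹ • y) = fun r => e (c r) := by
      rw [mulVec_smul, ← hv, hvc, smul_smul, inv_mul_cancel₀ hμ0, one_smul]
    -- An `F`-linear retraction `π` of the algebraic closure onto `F` turns the solution of
    -- `U z = c` over the closure into a solution over `F`.
    obtain ⟨π, hπ⟩ := LinearMap.exists_leftInverse_of_injective (Algebra.linearMap F k)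
      (LinearMap.ker_eq_bot.2 hinj)
    have hπe : ∀ x, π (e x) = x := fun x => LinearMap.congr_fun hπ x
    refine ⟨fun r => π ((μ⁻¹ • y) r), ?_⟩
    ext r
    rw [← hπe (c r), ← congrFun hy1 r]
    simp only [mulVec, dotProduct, map_sum, Matrix.map_apply]
    refine Finset.sum_congr rfl fun s _ => ?_
    rw [← smul_eq_mul, ← smul_eq_mul, ← map_smul]
    congr 1
    exact (algebraMap_smul k (U r s) _).symm
  obtain ⟨y, hy⟩ := hy
  have hc0 : c ≠ 0 := fun h => hci (by rw [h]; rfl)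
  have hcomm : A * N = N * A := by
    have : Commute (aeval A (X : F[X])) (aeval A f) := by
      unfold Commute SemiconjBy
      rw [← map_mul, ← map_mul, mul_comm]
    rw [aeval_X] at this
    exact this
  have hAc := hline (A *ᵥ c) (by rw [mulVec_mulVec, ← hcomm, ← mulVec_mulVec, hNc, mulVec_zero])
  set a := (A *ᵥ c) i / c i with ha
  have hfa : f.eval a = 0 := by
    have := aeval_mulVec_of_eigenvector A a c hAc f
    rw [← hN, hNc] at this
    exact (smul_eq_zero.1 this.symm).resolve_right hc0
  have hker : ∀ z, A *ᵥ z = a • z → ∃ r : F, z = r • c := by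
    intro z hz
    refine ⟨_, hline z ?_⟩
    rw [hN, aeval_mulVec_of_eigenvector A a z hz f, hfa, zero_smul]
  have hcc : c ⬝ᵥ c = 0 := by
    rw [← hy, dotProduct_mulVec, ← mulVec_transpose, mulVec_mulVec, hUU]
    simp
  refine ⟨y, a, by rwa [hy], by rwa [hy], hfa, ?_, by rwa [hy]⟩
  intro hf2
  -- If `φ''(a) = 0`, a Jordan chain `c, u` would put `u` in the line `ker N` as well.
  obtain ⟨u, hu⟩ := exists_mulVec_eq_of_isSymm (A - a • (1 : Matrix ι ι F))
      (hA.sub (by simp [IsSymm])) c (by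
        intro z hz
        obtain ⟨r, rfl⟩ := hker z (by simpa [sub_mulVec, smul_mulVec, sub_eq_zero] using hz)
        simp [hcc])
  have hAu : A *ᵥ u = a • u + c := by
    rw [← hu]; simp [sub_mulVec, smul_mulVec]
  have hNu : N *ᵥ u = 0 := by
    rw [hN, aeval_mulVec_of_eigen A a c u hAc hAu f, hfa, hf2]; simp
  rw [hline u hNu, mulVec_smul, hAc, smul_comm] at hAu
  exact hc0 (by simpa using hAu)

/-! ### Lifting to the integers modulo `p ^ 2` -/

/-- If `p` divides `det N` exactly once, then `N` modulo `p` has corank one, as witnessed by a nonzero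
cofactor: otherwise `adj N = p M` and `N M = (det N / p) I`, so that `p` divides a power of
`det N / p`. -/
lemma exists_adjugate_ne_zero {n : ℕ} (N : Matrix (Fin n) (Fin n) ℤ) (p : ℕ) [Fact p.Prime]
    (h1 : (p : ℤ) ∣ N.det) (h2 : ¬ (p : ℤ) ^ 2 ∣ N.det) :
    ∃ i j, (N.map (Int.cast : ℤ → ZMod p)).adjugate i j ≠ 0 := by
  by_contra! hcon
  have hp : Prime (p : ℤ) := Nat.prime_iff_prime_int.1 Fact.out
  have hdvd : ∀ i j, (p : ℤ) ∣ N.adjugate i j := by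
    intro i j
    rw [← ZMod.intCast_zmod_eq_zero_iff_dvd _ p, ← hcon i j]
    exact congrFun (congrFun ((Int.castRingHom (ZMod p)).map_adjugate N) i) j
  choose M hM using hdvd
  obtain ⟨c, hc⟩ := h1
  have hNM : N * Matrix.of M = c • (1 : Matrix (Fin n) (Fin n) ℤ) := by
    have hadj : N.adjugate = (p : ℤ) • Matrix.of M := by
      ext i j
      simp [hM]
    have := N.mul_adjugate
    rw [hadj, hc, mul_smul, mul_smul_comm] at this
    exact smul_right_injective _ hp.ne_zero this
  have hd := congrArg Matrix.det hNM
  rw [Matrix.det_mul, Matrix.det_smul, Matrix.det_one, mul_one] at hd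
  have hpc : (p : ℤ) ∣ c := hp.dvd_of_dvd_pow (by rw [← hd, hc, mul_assoc]; exact dvd_mul_right _ _)
  exact h2 (by rw [hc, pow_two]; exact mul_dvd_mul_left _ hpc)

/-- A primitive eigenvector of `A` modulo `p ^ 2` whose eigenvalue is a root of `f` modulo `p ^ 2` is
killed by `f(A)`, and hence also by `det f(A)`, modulo `p ^ 2`. -/
lemma sq_dvd_det_of_eigenvector {n : ℕ} (A : Matrix (Fin n) (Fin n) ℤ) (f : ℤ[X]) (p : ℕ)
    [Fact p.Prime] (a : ℤ) (w : Fin n → ℤ) (i : Fin n) (hi : ¬ (p : ℤ) ∣ w i)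
    (hw : ∀ r, (p : ℤ) ^ 2 ∣ (A *ᵥ w) r - a * w r) (hf : (p : ℤ) ^ 2 ∣ f.eval a) :
    (p : ℤ) ^ 2 ∣ (aeval A f).det := by
  have hp : Prime (p : ℤ) := Nat.prime_iff_prime_int.1 Fact.out
  let e := Int.castRingHom (ZMod (p ^ 2))
  have he : ∀ z : ℤ, e z = 0 ↔ (p : ℤ) ^ 2 ∣ z := by
    intro z
    have := ZMod.intCast_zmod_eq_zero_iff_dvd z (p ^ 2)
    rwa [Nat.cast_pow] at this
  set w' : Fin n → ZMod (p ^ 2) := fun r => e (w r) with hw'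
  have h1 : A.map e *ᵥ w' = e a • w' := by
    ext r
    have h2 := (he _).2 (hw r)
    rw [map_sub, map_mul, sub_eq_zero, e.map_mulVec] at h2
    exact h2
  have h3 := aeval_mulVec_of_eigenvector (A.map e) (e a) w' h1 (f.map e)
  rw [eval_map_apply, (he _).2 hf, zero_smul] at h3
  have h4 : ((aeval A f).map e) *ᵥ w' = 0 := by
    rw [← h3]; exact congrArg (· *ᵥ w') (aeval_map_intCast A f)
  have h5 : ((aeval A f).map e).det • w' = 0 := by
    have := congrArg (((aeval A f).map e).adjugate *ᵥ ·) h4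
    simpa [mulVec_mulVec, adjugate_mul, smul_mulVec] using this
  have h6 : e ((aeval A f).det * w i) = 0 := by
    rw [map_mul, e.map_det]
    exact congrFun h5 i
  rw [he] at h6
  exact (IsCoprime.pow_left ((hp.coprime_iff_not_dvd).2 hi)).dvd_of_dvd_mul_right h6

/-- The integral form of the theorem; it is applied with `U = ℓ Q`, `B = Qᵀ A Q` and `c = ℓ ^ 2`. -/
lemma sq_dvd_det_derivative_charpoly {n : ℕ} (A U B : Matrix (Fin n) (Fin n) ℤ) (hA : A.IsSymm)
    (p : ℕ) [Fact p.Prime] (c : ℤ) (hc : (p : ℤ) ^ 2 ∣ c) (hUU : Uᵀ * U = c • 1)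
    (hAU : A * U = U * B) (hU : ∃ i j, ¬ (p : ℤ) ∣ U i j)
    (hdet : (p : ℤ) ∣ (aeval A (derivative A.charpoly)).det) :
    (p : ℤ) ^ 2 ∣ (aeval A (derivative A.charpoly)).det := by
  by_contra hndvd
  set f := derivative A.charpoly with hf
  have hp : Prime (p : ℤ) := Nat.prime_iff_prime_int.1 Fact.out
  let e := Int.castRingHom (ZMod p)
  have he : ∀ z : ℤ, e z = 0 ↔ (p : ℤ) ∣ z := fun z => ZMod.intCast_zmod_eq_zero_iff_dvd z p
  have hpc : (p : ℤ) ∣ c := (dvd_pow_self _ two_ne_zero).trans hc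
  have hfk : derivative (A.map e).charpoly = f.map e := by
    rw [hf, ← derivative_map]; exact congrArg _ (A.charpoly_map e)
  have hNk : aeval (A.map e) (derivative (A.map e).charpoly) = (aeval A f).map e := by
    rw [hfk]; exact (aeval_map_intCast A f).symm
  obtain ⟨i, j, hadj⟩ := exists_adjugate_ne_zero _ p hdet hndvd
  obtain ⟨y, a, hy0, hya, hfa, hffa, hker⟩ := exists_eigenvector_mod_p (A.map e) (U.map e) (B.map e)
    (hA.map e) (by rw [← Matrix.map_mul, ← Matrix.map_mul, hAU])
    (by
      obtain ⟨r, s, hrs⟩ := hU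
      intro h
      exact hrs ((he _).1 (congrFun (congrFun h r) s)))
    (by
      rw [← transpose_map, ← Matrix.map_mul, hUU]
      ext r s
      change e ((c • (1 : Matrix (Fin n) (Fin n) ℤ)) r s) = 0
      rw [Matrix.smul_apply, smul_eq_mul, map_mul, (he _).2 hpc, zero_mul])
    (i := i) (j := j)
    (by
      rw [hNk]
      exact (e.map_det _).symm.trans ((he _).2 hdet))
    (by rw [hNk]; exact hadj)
  have hsurj : Function.Surjective e := ZMod.intCast_surjective
  obtain ⟨α, rfl⟩ := hsurj a
  obtain ⟨Y, rfl⟩ : ∃ Y : Fin n → ℤ, (fun r => e (Y r)) = y := by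
    choose Y hY using fun r => hsurj (y r)
    exact ⟨Y, funext hY⟩
  set w := U *ᵥ Y with hw
  have hmv : ∀ (M : Matrix (Fin n) (Fin n) ℤ) (v : Fin n → ℤ),
      M.map e *ᵥ (fun r => e (v r)) = fun r => e ((M *ᵥ v) r) :=
    fun M v => funext fun r => (e.map_mulVec M v r).symm
  rw [hmv, ← hw] at hy0 hya hker
  rw [hmv] at hya
  have hs : ∀ r, (p : ℤ) ∣ (A *ᵥ w) r - α * w r := by
    intro r
    rw [← he, map_sub, map_mul, sub_eq_zero]
    exact congrFun hya r
  choose s hs using hs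
  have hAw : A *ᵥ w = α • w + (p : ℤ) • s := by
    ext r
    simp [← hs r]
  -- Modulo `p ^ 2` the vector `w` is isotropic, both for the standard form and for the form of `A`.
  have hww : (p : ℤ) ^ 2 ∣ w ⬝ᵥ w := by
    have : w ⬝ᵥ w = c * (Y ⬝ᵥ Y) := by
      rw [hw, dotProduct_mulVec, ← mulVec_transpose, mulVec_mulVec, hUU, smul_mulVec,
        one_mulVec, smul_dotProduct, smul_eq_mul]
    rw [this]
    exact hc.mul_right _
  have hwAw : (p : ℤ) ^ 2 ∣ w ⬝ᵥ (A *ᵥ w) := by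
    have : w ⬝ᵥ (A *ᵥ w) = c * (Y ⬝ᵥ (B *ᵥ Y)) := by
      rw [hw, mulVec_mulVec, hAU, ← mulVec_mulVec, dotProduct_mulVec, ← mulVec_transpose,
        mulVec_mulVec, hUU, smul_mulVec, one_mulVec, smul_dotProduct, smul_eq_mul]
    rw [this]
    exact hc.mul_right _
  have hws : (p : ℤ) ∣ w ⬝ᵥ s := by
    rw [hAw, dotProduct_add, dotProduct_smul, dotProduct_smul, smul_eq_mul, smul_eq_mul] at hwAw
    have h := (Int.dvd_add_right (hww.mul_left α)).1 hwAw
    rw [pow_two] at h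
    exact Int.dvd_of_mul_dvd_mul_left hp.ne_zero h
  have hff : ¬ (p : ℤ) ∣ (derivative f).eval α := by
    rw [hfk, derivative_map, eval_map_apply] at hffa
    rwa [← he]
  obtain ⟨k, hk⟩ : (p : ℤ) ∣ f.eval α := by
    rw [hfk, eval_map_apply] at hfa
    rwa [← he]
  -- The choice of `t` makes `f (α + p t)` vanish modulo `p ^ 2`.
  obtain ⟨t, ht⟩ : ∃ t : ℤ, (p : ℤ) ∣ k + t * (derivative f).eval α := by
    obtain ⟨t, ht⟩ := hsurj (-(e k) / e ((derivative f).eval α))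
    refine ⟨t, ?_⟩
    rw [← he, map_add, map_mul, ht, div_mul_cancel₀ _ (fun h => hff ((he _).1 h))]
    simp
  -- To first order, `(A - (α + p t)) (w + p x) = p (s + (A - α) x - t w)`. The right-hand side is made
  -- to vanish modulo `p ^ 2` by choosing `x`; this is solvable since `w` is orthogonal to `w` and `s`
  -- modulo `p`.
  obtain ⟨x', hx'⟩ := exists_mulVec_eq_of_isSymm (A.map e - e α • (1 : Matrix _ _ (ZMod p)))
    ((hA.map e).sub (by simp [IsSymm])) (fun r => e (t * w r - s r)) (by
      intro z hz
      obtain ⟨q, rfl⟩ := hker z (by simpa [sub_mulVec, smul_mulVec, sub_eq_zero] using hz)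
      rw [smul_dotProduct]
      have h0 : (fun r => e (w r)) ⬝ᵥ (fun r => e (t * w r - s r)) =
          e (w ⬝ᵥ (t • w - s)) := (e.map_dotProduct w (t • w - s)).symm
      rw [h0, (he _).2, smul_zero]
      rw [dotProduct_sub, dotProduct_smul]
      exact dvd_sub (((dvd_pow_self _ two_ne_zero).trans hww).mul_left t) hws)
  obtain ⟨x, rfl⟩ : ∃ x : Fin n → ℤ, (fun r => e (x r)) = x' := by
    choose x hx using fun r => hsurj (x' r)
    exact ⟨x, funext hx⟩
  have hx : ∀ r, (p : ℤ) ∣ (A *ᵥ x) r - α * x r - (t * w r - s r) := by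
    intro r
    rw [← he, map_sub, sub_eq_zero, ← congrFun hx' r, sub_mulVec, hmv, smul_mulVec, one_mulVec,
      map_sub, map_mul]
    rfl
  obtain ⟨i₀, hi₀⟩ : ∃ i, ¬ (p : ℤ) ∣ w i := by
    by_contra! h
    exact hy0 (funext fun r => (he _).2 (h r))
  refine hndvd (sq_dvd_det_of_eigenvector A f p (α + p * t) (w + (p : ℤ) • x) i₀ ?_ ?_ ?_)
  · intro h
    apply hi₀
    simpa using (Int.dvd_add_left (dvd_mul_right (p : ℤ) (x i₀))).1 (by simpa using h)
  · intro r
    obtain ⟨m, hm⟩ := hx r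
    refine ⟨m - t * x r, ?_⟩
    rw [mulVec_add, mulVec_smul, hAw]
    simp only [Pi.add_apply, Pi.smul_apply, smul_eq_mul]
    linear_combination (p : ℤ) * hm
  · obtain ⟨q, hq⟩ := f.binomExpansion α (p * t)
    obtain ⟨m, hm⟩ := ht
    rw [hq, hk]
    exact ⟨m + q * t ^ 2, by linear_combination (p : ℤ) * hm⟩

/-- **Lemma 4.5.** Let `A` be a symmetric integer matrix with discriminant `Δ_A` and
`Q` a rational orthogonal matrix of level `ℓ` with `QᵀAQ` an integer matrix.  Let `p`
be an odd prime factor of `Δ_A`.  If `p² ∤ Δ_A`, then `p ∤ ℓ`. -/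
theorem odd_prime_exactly_dvd_disc_not_dvd_level {n : ℕ} (A : Matrix (Fin n) (Fin n) ℤ)
    (hA : A.IsSymm) (Q : Matrix (Fin n) (Fin n) ℚ) (hQ : Qᵀ * Q = 1)
    (ℓ : ℕ) (hℓ : IsLevel Q ℓ)
    (hint : IsIntegerMatrix (Qᵀ * A.map (Int.cast : ℤ → ℚ) * Q))
    (p : ℕ) (hp : p.Prime) (hodd : p ≠ 2)
    (hdvd : (p : ℤ) ∣ matrixDisc A) (hndvd : ¬ (p : ℤ) ^ 2 ∣ matrixDisc A) :
    ¬ p ∣ ℓ := by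
  intro hpl
  have : Fact p.Prime := ⟨hp⟩
  have hunit : IsUnit ((-1 : ℤ) ^ (n * (n - 1) / 2)) := (isUnit_neg_one).pow _
  rw [matrixDisc, norm_mk_charpoly_eq_det, hunit.dvd_mul_left] at hdvd hndvd
  obtain ⟨hℓ0, hℓint, hℓmin⟩ := hℓ
  choose U' hU' using hℓint
  choose B' hB' using hint
  set U : Matrix (Fin n) (Fin n) ℤ := Matrix.of U' with hUdef
  set B : Matrix (Fin n) (Fin n) ℤ := Matrix.of B' with hBdef
  have hU : U.map (Int.cast : ℤ → ℚ) = (ℓ : ℚ) • Q := by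
    ext i j; exact (hU' i j).symm
  have hB : B.map (Int.cast : ℤ → ℚ) = Qᵀ * A.map (Int.cast : ℤ → ℚ) * Q := by
    ext i j; exact (hB' i j).symm
  have hinj : Function.Injective (fun M : Matrix (Fin n) (Fin n) ℤ => M.map (Int.cast : ℤ → ℚ)) :=
    Matrix.map_injective Int.cast_injective
  have hmul : ∀ M N : Matrix (Fin n) (Fin n) ℤ, (M * N).map (Int.cast : ℤ → ℚ) =
      M.map (Int.cast : ℤ → ℚ) * N.map (Int.cast : ℤ → ℚ) :=
    fun M N => Matrix.map_mul (f := Int.castRingHom ℚ)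
  have hQ' : Q * Qᵀ = 1 := mul_eq_one_comm.1 hQ
  have hUU : Uᵀ * U = ((ℓ : ℤ) ^ 2) • 1 := by
    apply hinj
    dsimp only
    rw [hmul, transpose_map, hU, transpose_smul, smul_mul_smul_comm, hQ]
    ext i j
    rw [Matrix.map_apply, Matrix.smul_apply, Matrix.smul_apply, Matrix.one_apply, Matrix.one_apply]
    split_ifs <;> simp [pow_two]
  have hAU : A * U = U * B := by
    apply hinj
    dsimp only
    rw [hmul, hmul, hU, hB, mul_smul_comm, smul_mul_assoc, Matrix.mul_assoc, ← Matrix.mul_assoc Q,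
      hQ', Matrix.one_mul]
  refine hndvd (sq_dvd_det_derivative_charpoly A U B hA p ((ℓ : ℤ) ^ 2)
    (pow_dvd_pow_of_dvd (Int.natCast_dvd_natCast.2 hpl) 2) hUU hAU ?_ hdvd)
  -- Otherwise `ℓ / p` would also clear the denominators of `Q`.
  by_contra! hall
  obtain ⟨m, rfl⟩ := hpl
  have hp0 : (p : ℚ) ≠ 0 := by exact_mod_cast hp.ne_zero
  have hm : 0 < m := Nat.pos_of_mul_pos_left hℓ0
  have hle := hℓmin m hm (by
    intro i j
    obtain ⟨z, hz⟩ := hall i j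
    refine ⟨z, ?_⟩
    have h1 := hU' i j
    have h2 : U' i j = p * z := hz
    rw [h2] at h1
    push_cast at h1
    simp only [Matrix.smul_apply, smul_eq_mul] at h1 ⊢
    rw [mul_assoc] at h1
    exact mul_left_cancel₀ hp0 h1)
  nlinarith [hp.two_le]
end

section
/- Let A be an n×n symmetric integer matrix whose discriminant Δ_A is odd and square-free, and let p be any prime dividing Δ_A, with λ_0 an integer such that (x − λ_0)² divides the characteristic polynomial φ(x) of A over F_p. Then rank_p(λ_0 I − A) = n − 1. -/
/-!
Write `φ` for the characteristic polynomial of `A`. Since `λ₀` is a double root of `φ` modulo `p`,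
the matrix `λ₀ I - A` is singular modulo `p` and `p ∣ φ'(λ₀)`. If its corank modulo `p` were at
least two, then `p ^ 2 ∣ det (λ₀ I - A) = φ(λ₀)` (`sq_dvd_det_of_rank_map_le`). A monic integer
polynomial with `p ^ 2 ∣ φ(λ₀)` and `p ∣ φ'(λ₀)` has discriminant divisible by `p ^ 2`
(`sq_dvd_norm_derivative`), contradicting square-freeness.

Both divisibilities come from `natCard_dvd_det`: the order of any finite quotient of the cokernel of
an integral endomorphism divides its determinant. For the matrix, the quotient is the cokernel
modulo `p`. For multiplication by `φ'` on `ℤ[X]/(φ)`, whose determinant is the discriminant up to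
sign, it is a ring of order `p ^ 2` in which `φ` and `φ'` have a common root: `ℤ/p²` if
`p ∤ φ''(λ₀)`, and `𝔽_p[ε]` otherwise.
-/


open Polynomial Matrix

/-- If an endomorphism `f` of a finite free `ℤ`-module is killed by a surjection `g` onto a
finite group `H`, then `|H|` divides `det f`: the index of the image of `f` is `|det f|`
(when nonzero), and `H` is a quotient of the cokernel. -/
lemma natCard_dvd_det {M H : Type*} [AddCommGroup M] [Module.Free ℤ M] [Module.Finite ℤ M]
    [AddCommGroup H] (f : M →ₗ[ℤ] M) (g : M →+ H) (hg : Function.Surjective g)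
    (hgf : ∀ x, g (f x) = 0) : (Nat.card H : ℤ) ∣ LinearMap.det f := by
  by_cases h0 : LinearMap.det f = 0
  · simp [h0]
  have hinj : Function.Injective f := by
    rw [← LinearMap.ker_eq_bot]
    by_contra h
    exact h0 (LinearMap.det_eq_zero_iff_ker_ne_bot.mpr h)
  have hdet := Submodule.natAbs_det_equiv (LinearMap.range f) (LinearEquiv.ofInjective f hinj)
  have hf : (LinearMap.range f).subtype ∘ₗ
      AddMonoidHom.toIntLinearMap (LinearEquiv.ofInjective f hinj : M →+ LinearMap.range f) = f := by
    ext x; rfl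
  rw [hf] at hdet
  rw [← Int.dvd_natAbs, Int.natCast_dvd_natCast, hdet]
  have hle : (LinearMap.range f).toAddSubgroup ≤ g.ker := by
    rintro _ ⟨x, rfl⟩
    exact hgf x
  have := AddSubgroup.index_dvd_of_le hle
  rwa [AddSubgroup.index_ker, AddMonoidHom.range_eq_top.mpr hg,
    Nat.card_congr (AddSubgroup.topEquiv (G := H)).toEquiv] at this

/-- An integer matrix of corank at least two modulo `p` has determinant divisible by `p ^ 2`. -/
lemma sq_dvd_det_of_rank_map_le {n : ℕ} (M : Matrix (Fin n) (Fin n) ℤ) (p : ℕ) [Fact p.Prime]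
    (h : (M.map (Int.castRingHom (ZMod p))).rank + 2 ≤ n) : ((p : ℤ) ^ 2) ∣ M.det := by
  set N := M.map (Int.castRingHom (ZMod p)) with hN
  let W := LinearMap.range N.mulVecLin
  let c : (Fin n → ℤ) →+ (Fin n → ZMod p) := (Int.castAddHom (ZMod p)).compLeft (Fin n)
  let g : (Fin n → ℤ) →+ ((Fin n → ZMod p) ⧸ W) := W.mkQ.toAddMonoidHom.comp c
  have hg : Function.Surjective g := by
    refine (Submodule.mkQ_surjective W).comp fun v => ?_
    choose w hw using fun i => ZMod.intCast_surjective (v i)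
    exact ⟨w, funext hw⟩
  have hgf : ∀ x, g (Matrix.toLin' M x) = 0 := by
    intro x
    refine (Submodule.Quotient.mk_eq_zero W).mpr ⟨c x, ?_⟩
    ext i
    simp [c, hN, Matrix.mulVec, dotProduct]
  have key := natCard_dvd_det (Matrix.toLin' M) g hg hgf
  rw [LinearMap.det_toLin', Module.natCard_eq_pow_finrank (K := ZMod p), Nat.card_zmod] at key
  have hfr := Submodule.finrank_quotient_add_finrank W
  rw [Module.finrank_fin_fun] at hfr
  have hW : Module.finrank (ZMod p) W = N.rank := rfl
  refine dvd_trans ?_ key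
  push_cast
  exact pow_dvd_pow _ (by omega)

/-- If `q(α) = 0` and `r(α) = 0` in a ring `S` generated by `α`, then the norm of `r` from
`ℤ[X]/(q)` is divisible by `|S|`. -/
lemma natCard_dvd_norm_mk {S : Type*} [CommRing S] (q r : ℤ[X]) (hq : q.Monic) (α : S)
    (hα : ∀ s : S, ∃ t : ℤ[X], t.eval₂ (Int.castRingHom S) α = s)
    (hqα : q.eval₂ (Int.castRingHom S) α = 0) (hrα : r.eval₂ (Int.castRingHom S) α = 0) :
    (Nat.card S : ℤ) ∣ Algebra.norm ℤ (AdjoinRoot.mk q r) := by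
  have := hq.free_adjoinRoot
  have := hq.finite_adjoinRoot
  let F : AdjoinRoot q →+* S := AdjoinRoot.lift (Int.castRingHom S) α hqα
  have hF : ∀ t : ℤ[X], F (AdjoinRoot.mk q t) = t.eval₂ (Int.castRingHom S) α :=
    fun t => AdjoinRoot.lift_mk hqα t
  rw [Algebra.norm_apply]
  refine natCard_dvd_det _ F.toAddMonoidHom ?_ ?_
  · intro s
    obtain ⟨t, rfl⟩ := hα s
    exact ⟨AdjoinRoot.mk q t, hF t⟩
  · intro x
    change F (AdjoinRoot.mk q r * x) = 0
    rw [map_mul, hF, hrα, zero_mul]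

lemma eval₂_intCast_add_of_sq_eq_zero {S : Type*} [CommRing S] (t : ℤ[X]) (a : ℤ) (y : S)
    (hy : y ^ 2 = 0) : t.eval₂ (Int.castRingHom S) ((a : S) + y) =
      ((t.eval a : ℤ) : S) + ((t.derivative.eval a : ℤ) : S) * y := by
  rw [← eval_map, eval_add_of_sq_eq_zero _ _ _ hy, derivative_map, eval_intCast_map,
    eval_intCast_map]
  simp

/-- If `q` is monic with `p ^ 2 ∣ q(a)` and `p ∣ q'(a)`, then the norm of `q'` from `ℤ[X]/(q)`,
which is the discriminant of `q` up to sign, is divisible by `p ^ 2`. If `p ∤ q''(a)`, a Newton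
step from `a` gives a common root `a + p t` of `q` and `q'` modulo `p ^ 2`; if `p ∣ q''(a)`, then
`a + ε` is a common root of `q` and `q'` in the dual numbers over `𝔽_p`. -/
lemma sq_dvd_norm_derivative (q : ℤ[X]) (hq : q.Monic) (p : ℕ) [Fact p.Prime] (a : ℤ)
    (h0 : (p : ℤ) ^ 2 ∣ q.eval a) (h1 : (p : ℤ) ∣ q.derivative.eval a) :
    (p : ℤ) ^ 2 ∣ Algebra.norm ℤ (AdjoinRoot.mk q q.derivative) := by
  by_cases h2 : (p : ℤ) ∣ q.derivative.derivative.eval a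
  · let α : TrivSqZeroExt (ZMod p) (ZMod p) := (a : DualNumber (ZMod p)) + DualNumber.eps
    have hα (t : ℤ[X]) : t.eval₂ (Int.castRingHom (TrivSqZeroExt (ZMod p) (ZMod p))) α =
        ((t.eval a : ℤ) : DualNumber (ZMod p)) +
          ((t.derivative.eval a : ℤ) : DualNumber (ZMod p)) * DualNumber.eps :=
      eval₂_intCast_add_of_sq_eq_zero t a _ (by rw [sq]; exact DualNumber.eps_mul_eps)
    have hz (z : ℤ) (hz : (p : ℤ) ∣ z) : (z : DualNumber (ZMod p)) = 0 := by
      ext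
      · simpa using (ZMod.intCast_zmod_eq_zero_iff_dvd z p).mpr hz
      · simp
    have key := natCard_dvd_norm_mk q q.derivative hq α ?_ ?_ ?_
    · have hc : Nat.card (TrivSqZeroExt (ZMod p) (ZMod p)) = p ^ 2 := by
        change Nat.card (ZMod p × ZMod p) = _
        rw [Nat.card_prod, Nat.card_zmod, sq]
      rw [hc] at key
      exact_mod_cast key
    · intro s
      obtain ⟨u, hu⟩ := ZMod.intCast_surjective s.fst
      obtain ⟨v, hv⟩ := ZMod.intCast_surjective s.snd
      refine ⟨C u + C v * (X - C a), ?_⟩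
      rw [hα]
      ext
      · simp [hu]
      · simp [hv]
    · rw [hα, hz _ (dvd_trans (dvd_pow_self _ two_ne_zero) h0), hz _ h1]; simp
    · rw [hα, hz _ h1, hz _ h2]; simp
  · obtain ⟨b, hb⟩ := h1
    -- `t` solves `b + q''(a) t ≡ 0 (mod p)`, so that `q'(a + p t) ≡ 0 (mod p ^ 2)`.
    obtain ⟨t, ht⟩ : ∃ t : ℤ, (p : ℤ) ∣ b + q.derivative.derivative.eval a * t := by
      have hne : ((q.derivative.derivative.eval a : ℤ) : ZMod p) ≠ 0 := by
        rwa [Ne, ZMod.intCast_zmod_eq_zero_iff_dvd]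
      obtain ⟨t, ht⟩ := ZMod.intCast_surjective
        (-(b : ZMod p) / ((q.derivative.derivative.eval a : ℤ) : ZMod p))
      refine ⟨t, (ZMod.intCast_zmod_eq_zero_iff_dvd _ p).mp ?_⟩
      push_cast
      rw [ht]
      field_simp
      ring
    have hα (r : ℤ[X]) : r.eval₂ (Int.castRingHom (ZMod (p ^ 2)))
          ((a : ZMod (p ^ 2)) + ((p * t : ℤ) : ZMod (p ^ 2))) =
        ((r.eval a + r.derivative.eval a * (p * t) : ℤ) : ZMod (p ^ 2)) := by
      rw [eval₂_intCast_add_of_sq_eq_zero]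
      · push_cast; rfl
      · rw [← Int.cast_pow, ZMod.intCast_zmod_eq_zero_iff_dvd]
        exact ⟨t ^ 2, by push_cast; ring⟩
    have key := natCard_dvd_norm_mk q q.derivative hq
      ((a : ZMod (p ^ 2)) + ((p * t : ℤ) : ZMod (p ^ 2))) ?_ ?_ ?_
    · rw [Nat.card_zmod] at key
      exact_mod_cast key
    · intro s
      obtain ⟨u, rfl⟩ := ZMod.intCast_surjective s
      exact ⟨C u, by rw [eval₂_C]; rfl⟩
    · rw [hα, ZMod.intCast_zmod_eq_zero_iff_dvd]
      push_cast
      exact dvd_add h0 ⟨b * t, by rw [hb]; ring⟩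
    · rw [hα, ZMod.intCast_zmod_eq_zero_iff_dvd]
      push_cast
      obtain ⟨k, hk⟩ := ht
      exact ⟨k, by rw [hb]; linear_combination (p : ℤ) * hk⟩

/-- **Remark 4.6.** Let `A` be a symmetric integer matrix whose discriminant `Δ_A` is
odd and square-free, `p` a prime dividing `Δ_A`, and `λ₀` an integer with `(x - λ₀)²`
dividing the characteristic polynomial of `A` over `𝔽_p`.  Then
`rank_p(λ₀I - A) = n - 1`. -/
theorem corank_one_of_odd_squarefree_disc {n : ℕ} (A : Matrix (Fin n) (Fin n) ℤ)
    (hA : A.IsSymm) (hoddD : Odd (matrixDisc A)) (hsf : Squarefree (matrixDisc A))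
    (p : ℕ) (hp : p.Prime) (hdvd : (p : ℤ) ∣ matrixDisc A)
    (lam : ℤ)
    (hfac : (Polynomial.X - Polynomial.C ((lam : ZMod p))) ^ 2 ∣
      (A.charpoly).map (Int.castRingHom (ZMod p))) :
    ((lam • (1 : Matrix (Fin n) (Fin n) ℤ) - A).map
      (Int.castRingHom (ZMod p))).rank = n - 1 := by
  have : Fact p.Prime := ⟨hp⟩
  set M := lam • (1 : Matrix (Fin n) (Fin n) ℤ) - A with hM
  have hdet : A.charpoly.eval lam = M.det := by
    rw [Matrix.eval_charpoly, hM, Matrix.scalar_apply, Matrix.smul_one_eq_diagonal]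
  have heval (r : ℤ[X]) : ((r.eval lam : ℤ) : ZMod p) =
      (r.map (Int.castRingHom (ZMod p))).eval (lam : ZMod p) := by
    simp
  obtain ⟨s, hs⟩ := hfac
  have h0 : ((A.charpoly.eval lam : ℤ) : ZMod p) = 0 := by
    rw [heval, hs]; simp
  have h1 : (p : ℤ) ∣ A.charpoly.derivative.eval lam := by
    rw [← ZMod.intCast_zmod_eq_zero_iff_dvd, heval, ← derivative_map, hs]
    simp [derivative_mul, derivative_pow]
  by_contra hrank
  have hle : (M.map (Int.castRingHom (ZMod p))).rank ≤ n := Matrix.rank_le_width _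
  have hne : (M.map (Int.castRingHom (ZMod p))).rank ≠ n := by
    intro h
    have hdet0 : (M.map (Int.castRingHom (ZMod p))).det = 0 := by
      rw [← h0, hdet]
      exact ((Int.castRingHom (ZMod p)).map_det M).symm
    obtain ⟨v, hv, hMv⟩ := Matrix.exists_mulVec_eq_zero_iff.mpr hdet0
    have hrn := LinearMap.finrank_range_add_finrank_ker (M.map (Int.castRingHom (ZMod p))).mulVecLin
    rw [Module.finrank_fin_fun] at hrn
    change Matrix.rank _ + _ = n at hrn
    have hker : Module.finrank (ZMod p)
        (LinearMap.ker (M.map (Int.castRingHom (ZMod p))).mulVecLin) = 0 := by omega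
    rw [Submodule.finrank_eq_zero, Submodule.eq_bot_iff] at hker
    exact hv (hker v hMv)
  have hsq : (p : ℤ) ^ 2 ∣ matrixDisc A :=
    (sq_dvd_norm_derivative _ A.charpoly_monic p lam
      (hdet ▸ sq_dvd_det_of_rank_map_le M p (by omega)) h1).mul_left _
  rw [sq] at hsq
  exact (Nat.prime_iff_prime_int.mp hp).not_isUnit (hsf _ hsq)
end
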